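/- arXiv:2212.08644 — 2 statements merged into one kernel-verified Lean document; each statement's English description precedes it below -/
import Mathlib

section
/- Structure of h-formally smooth hfp algebras: let (A, I) be a Henselian pair and let B be an A-algebra which is hfp over A with respect to I and such that A → B is h-formally smooth. Then there exist a smooth A-algebra R, an A-algebra H together with an A-algebra homomorphism R → H exhibiting H as a Henselization of the pair (R, I·R), and a finitely generated ideal J of H with J ⊆ ⋂_{r ≥ 1} I^r·H, such that B is isomorphic as an A-algebra to H/J. -/
universe u

/-- A ring homomorphism `ρ : R →+* H` exhibits `H` as a Henselization of the pair `(R, K)`: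
`(H, K·H)` is a Henselian pair, and every map from `(R, K)` to a Henselian pair factors
uniquely through `ρ`. -/
def IsHenselization {R H : Type u} [CommRing R] [CommRing H]
    (K : Ideal R) (ρ : R →+* H) : Prop :=
  HenselianRing H (K.map ρ) ∧
    ∀ (C : Type u) [CommRing C] (J : Ideal C), HenselianRing C J →
      ∀ f : R →+* C, K.map f ≤ J → ∃! g : H →+* C, g.comp ρ = f

/-- `φ : A →+* B` is Henselian finitely presented (hfp) with respect to `I`:
`B` is a Henselization of `(R, I·R)` for some finitely presented `A`-algebra `R`. -/
def IsHfp {A B : Type u} [CommRing A] [CommRing B] (φ : A →+* B) (I : Ideal A) : Prop :=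
  ∃ (R : Type u) (_ : CommRing R) (ψ : A →+* R) (ρ : R →+* B),
    ψ.FinitePresentation ∧ ρ.comp ψ = φ ∧ IsHenselization (I.map ψ) ρ

/-- `φ : A →+* B` is h-formally étale with respect to `I`. -/
def IsHFormallyEtale {A B : Type u} [CommRing A] [CommRing B] (φ : A →+* B) (I : Ideal A) :
    Prop :=
  ∀ (E C : Type u) [CommRing E] [CommRing C] (e : A →+* E) (c : A →+* C)
    (p : E →+* C) (u : B →+* C),
    p.comp e = c → u.comp φ = c →
    (∃ N : ℕ, 1 ≤ N ∧ Ideal.map e (I ^ N) = ⊥ ∧ Ideal.map c (I ^ N) = ⊥) →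
    Function.Surjective p →
    (∃ M : ℕ, 1 ≤ M ∧ RingHom.ker p ^ M = ⊥) →
    ∃! v : B →+* E, v.comp φ = e ∧ p.comp v = u

/-- `φ : A →+* B` is h-formally smooth with respect to `I`. -/
def IsHFormallySmooth {A B : Type u} [CommRing A] [CommRing B] (φ : A →+* B) (I : Ideal A) :
    Prop :=
  ∀ (E C : Type u) [CommRing E] [CommRing C] (e : A →+* E) (c : A →+* C)
    (p : E →+* C) (u : B →+* C),
    p.comp e = c → u.comp φ = c →
    (∃ N : ℕ, 1 ≤ N ∧ Ideal.map e (I ^ N) = ⊥ ∧ Ideal.map c (I ^ N) = ⊥) →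
    Function.Surjective p →
    (∃ M : ℕ, 1 ≤ M ∧ RingHom.ker p ^ M = ⊥) →
    ∃ v : B →+* E, v.comp φ = e ∧ p.comp v = u

/-- `φ : A →+* B` is h-étale with respect to `I`: `B` is a Henselization of `(R, I·R)`
for some étale `A`-algebra `R`. -/
def IsHEtale {A B : Type u} [CommRing A] [CommRing B] (φ : A →+* B) (I : Ideal A) : Prop :=
  ∃ (R : Type u) (_ : CommRing R) (_ : Algebra A R) (ρ : R →+* B),
    Algebra.Etale A R ∧ ρ.comp (algebraMap A R) = φ ∧
      IsHenselization (I.map (algebraMap A R)) ρ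

/-- `φ : A →+* B` is h-smooth with respect to `I`: `B` is a Henselization of `(R, I·R)`
for some smooth `A`-algebra `R`. -/
def IsHSmooth {A B : Type u} [CommRing A] [CommRing B] (φ : A →+* B) (I : Ideal A) : Prop :=
  ∃ (R : Type u) (_ : CommRing R) (_ : Algebra A R) (ρ : R →+* B),
    Algebra.Smooth A R ∧ ρ.comp (algebraMap A R) = φ ∧
      IsHenselization (I.map (algebraMap A R)) ρ

/-- A ring homomorphism is flat if it makes the target into a flat module over the source. -/
def RingHomFlat {A C : Type u} [CommRing A] [CommRing C] (f : A →+* C) : Prop :=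
  letI := f.toAlgebra
  Module.Flat A C

/-- A ring homomorphism is smooth if it makes the target into a smooth algebra over the
source (smooth = formally smooth + finitely presented). -/
def RingHomSmooth {A C : Type u} [CommRing A] [CommRing C] (f : A →+* C) : Prop :=
  letI := f.toAlgebra
  Algebra.Smooth A C

/-- A ring homomorphism is étale if it makes the target into an étale algebra over the
source (étale = formally étale + finitely presented). -/
def RingHomEtale {A C : Type u} [CommRing A] [CommRing C] (f : A →+* C) : Prop :=
  letI := f.toAlgebra
  Algebra.Etale A C

namespace HS

open Polynomial

theorem isUnit_of_mk {S : Type*} [CommRing S] {J : Ideal S} (hJ : J ≤ Ideal.jacobson ⊥) {x : S}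
    (hx : IsUnit (Ideal.Quotient.mk J x)) : IsUnit x := by
  obtain ⟨y, hy⟩ := hx.exists_right_inv
  obtain ⟨y, rfl⟩ := Ideal.Quotient.mk_surjective y
  rw [← map_mul, ← map_one (Ideal.Quotient.mk J), Ideal.Quotient.eq] at hy
  have := Ideal.mem_jacobson_bot.1 (hJ hy) 1
  rw [mul_one, sub_add_cancel] at this
  exact isUnit_of_mul_isUnit_left this

theorem isUnit_of_sub_one_mem {S : Type*} [CommRing S] {J : Ideal S} (hJ : J ≤ Ideal.jacobson ⊥)
    {x : S} (hx : x - 1 ∈ J) : IsUnit x := by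
  have := Ideal.mem_jacobson_bot.1 (hJ hx) 1
  simpa using this

theorem coeff_mem {S : Type*} [CommRing S] {J : Ideal S} {G : S[X]}
    (hG : G.map (Ideal.Quotient.mk J) = 0) (n : ℕ) : G.coeff n ∈ J := by
  rw [← Ideal.Quotient.eq_zero_iff_mem, ← coeff_map, hG, coeff_zero]

theorem eval_mem {S : Type*} [CommRing S] {J : Ideal S} {G : S[X]}
    (hG : G.map (Ideal.Quotient.mk J) = 0) (x : S) : G.eval x ∈ J := by
  rw [← Ideal.Quotient.eq_zero_iff_mem, ← eval_map_apply, hG, eval_zero]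

theorem eval_sub_factor {S : Type*} [CommRing S] {J : Ideal S} {G : S[X]}
    (hG : G.map (Ideal.Quotient.mk J) = 0) (x y : S) :
    ∃ q ∈ J, G.eval x - G.eval y = (x - y) * q := by
  have : ∀ l : ℕ, ∃ q, x ^ l - y ^ l = (x - y) * q := fun l => sub_dvd_pow_sub_pow x y l
  choose q hq using this
  refine ⟨∑ l ∈ Finset.range (G.natDegree + 1), G.coeff l * q l,
    Ideal.sum_mem _ fun l _ => Ideal.mul_mem_right _ _ (coeff_mem hG l), ?_⟩
  rw [eval_eq_sum_range, eval_eq_sum_range, ← Finset.sum_sub_distrib, Finset.mul_sum]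
  refine Finset.sum_congr rfl fun l _ => ?_
  rw [← mul_sub, hq]; ring

theorem fix_unique {S : Type*} [CommRing S] {J : Ideal S} (hJ : J ≤ Ideal.jacobson ⊥) {G : S[X]}
    (hG : G.map (Ideal.Quotient.mk J) = 0) {x y : S} (hx : x = 1 + G.eval x)
    (hy : y = 1 + G.eval y) : x = y := by
  obtain ⟨q, hq, h⟩ := eval_sub_factor hG x y
  have h1 : (x - y) * (1 - q) = 0 := by linear_combination hx - hy + h
  have h2 : IsUnit (1 - q) := isUnit_of_sub_one_mem hJ (by simpa using hq)
  rw [h2.mul_left_eq_zero] at h1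
  exact sub_eq_zero.1 h1

/-- fixed point property -/
def HP {S : Type*} [CommRing S] (J : Ideal S) : Prop :=
  ∀ G : S[X], G.map (Ideal.Quotient.mk J) = 0 → ∃ z, z = 1 + G.eval z

theorem HP.of_hens {S : Type*} [CommRing S] (J : Ideal S) [hC : HenselianRing S J] : HP J := by
  intro G hG
  have hjac : J ≤ Ideal.jacobson ⊥ := hC.jac
  have ha0 : G.coeff 0 ∈ J := coeff_mem hG 0
  set u := 1 + G.coeff 0 with hu
  have hdG : G.divX.map (Ideal.Quotient.mk J) = 0 := by
    ext n
    rw [coeff_map, coeff_divX, ← coeff_map, hG]; simp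
  set G1 := G.divX.comp (C u * X) with hG1
  have hG1J : G1.map (Ideal.Quotient.mk J) = 0 := by
    rw [hG1, map_comp, hdG, zero_comp]
  set d := G1.natDegree
  set r := reflect d G1 with hr
  have hrJ : r.map (Ideal.Quotient.mk J) = 0 := by
    rw [hr, ← reflect_map, hG1J, reflect_zero]
  have hrd : r.degree < (d + 1 : ℕ) := by
    rw [degree_lt_iff_coeff_zero]
    intro m hm
    rw [hr, coeff_reflect, revAt_eq_self_of_lt (by omega)]
    exact coeff_eq_zero_of_natDegree_lt (by omega)
  obtain ⟨w, hw, hw1⟩ := hC.is_henselian (X ^ (d + 1) + (r - X ^ d))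
    (monic_X_pow_add (by
      refine (degree_sub_le _ _).trans_lt (max_lt hrd ?_)
      refine (degree_X_pow_le d).trans_lt ?_
      exact_mod_cast Nat.lt_succ_self d)) 1
    (by simpa using eval_mem hrJ 1)
    (by
      have : (r.derivative.eval 1) ∈ J := eval_mem (by rw [← derivative_map, hrJ, derivative_zero]) 1
      have h2 := Ideal.Quotient.eq_zero_iff_mem.2 this
      simp [derivative_X_pow, h2])
  have hwu : IsUnit w := isUnit_of_sub_one_mem hjac hw1
  obtain ⟨w, rfl⟩ := hwu
  have h3 : r.eval (w : S) = w ^ d * G1.eval (↑w⁻¹ : S) := by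
    have := eval₂_reflect_mul_pow (RingHom.id S) (↑(w⁻¹) : S) d G1 le_rfl
    rw [invOf_units, inv_inv, ← hr] at this
    simp only [eval₂_id] at this
    rw [← this, mul_left_comm, ← mul_pow]
    simp
  have h4 : (w : S) ^ d * (w - 1 + G1.eval (↑w⁻¹ : S)) = 0 := by
    have : eval (w : S) (X ^ (d + 1) + (r - X ^ d)) = 0 := hw
    simp [h3] at this
    linear_combination this
  rw [((w.isUnit).pow d).mul_right_eq_zero] at h4
  refine ⟨u * (↑w⁻¹ : S), ?_⟩
  have h5 : G.eval (u * (↑w⁻¹ : S)) = G.coeff 0 + (u * (↑w⁻¹ : S)) * G1.eval (↑w⁻¹ : S) := by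
    conv_lhs => rw [← divX_mul_X_add G]
    simp [hG1]; ring
  have h6 : (w : S) * (↑w⁻¹ : S) = 1 := by simp
  rw [h5]
  have h7 : 1 + G.coeff 0 = u := hu.symm
  linear_combination -h7 - u * (↑w⁻¹ : S) * h4 + u * h6

theorem HP.hens {S : Type*} [CommRing S] {J : Ideal S} (h : HP J) : HenselianRing S J := by
  have hjac : J ≤ Ideal.jacobson ⊥ := by
    intro x hx
    rw [Ideal.mem_jacobson_bot]
    intro y
    obtain ⟨z, hz⟩ := h (-C (x * y) * X) (by
      have : Ideal.Quotient.mk J x = 0 := Ideal.Quotient.eq_zero_iff_mem.2 hx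
      simp [this])
    refine IsUnit.of_mul_eq_one z ?_
    simp at hz
    linear_combination hz
  refine ⟨hjac, ?_⟩
  intro f hf a₀ h0 h1
  have h2 := isUnit_of_mk hjac h1
  obtain ⟨u, hu⟩ := h2
  obtain ⟨Q, hQ⟩ := binomExpansion (f.map C) (C a₀) X
  set c := f.eval a₀ with hc
  have hx : ∀ x, f.eval (a₀ + x) = c + u * x + Q.eval x * x ^ 2 := by
    intro x
    have := congrArg (eval x) hQ
    rw [eval_map, derivative_map] at this
    simp only [eval_map_apply, eval_add, eval_mul, eval_C, eval_X, eval_pow] at this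
    rw [hu, ← this]
    change _ = eval x (f.comp (C a₀ + X))
    simp
  obtain ⟨z, hz⟩ := h (C (c * (↑u⁻¹ : S) ^ 2) * X ^ 2 * Q.comp (C (-c * (↑u⁻¹ : S)) * X)) (by
      have : Ideal.Quotient.mk J c = 0 := Ideal.Quotient.eq_zero_iff_mem.2 h0
      simp [this])
  refine ⟨a₀ + (-c * (↑u⁻¹ : S) * z), ?_, ?_⟩
  · rw [IsRoot.def, hx]
    simp only [eval_mul, eval_C, eval_pow, eval_X, eval_comp] at hz
    have h6 : (u : S) * (↑u⁻¹ : S) = 1 := by simp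
    linear_combination -c * hz - c * z * h6
  · rw [add_sub_cancel_left, mul_assoc]
    exact Ideal.mul_mem_right _ _ (neg_mem h0)

theorem hens_surj {S D : Type*} [CommRing S] [CommRing D] {J : Ideal S} (hC : HenselianRing S J)
    (π : S →+* D) (hπ : Function.Surjective π) : HenselianRing D (J.map π) := by
  apply HP.hens
  intro G hG
  have : ∀ n, ∃ x ∈ J, π x = G.coeff n := by
    intro n
    exact (Ideal.mem_map_iff_of_surjective π hπ).1 (coeff_mem hG n)
  choose a ha hpa using this
  obtain ⟨z, hz⟩ := HP.of_hens J (∑ l ∈ Finset.range (G.natDegree + 1), C (a l) * X ^ l) (by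
    rw [Polynomial.map_sum]
    refine Finset.sum_eq_zero fun l _ => ?_
    simp [Ideal.Quotient.eq_zero_iff_mem.2 (ha l)])
  refine ⟨π z, ?_⟩
  conv_lhs => rw [hz]
  rw [eval_eq_sum_range (p := G), eval_finsetSum]
  simp [hpa]

theorem hens_nil {S : Type*} [CommRing S] {J : Ideal S} {n : ℕ} (hJ : J ^ n = ⊥) :
    HenselianRing S J := by
  apply HP.hens
  intro G hG
  have : ∀ k : ℕ, ∃ z, z - (1 + G.eval z) ∈ J ^ k := by
    intro k
    induction k with
    | zero => exact ⟨1, by simp⟩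
    | succ k ih =>
      obtain ⟨z, hz⟩ := ih
      refine ⟨1 + G.eval z, ?_⟩
      obtain ⟨q, hq, h⟩ := eval_sub_factor hG z (1 + G.eval z)
      have : 1 + G.eval z - (1 + G.eval (1 + G.eval z)) = (z - (1 + G.eval z)) * q := by
        rw [← h]; ring
      rw [this, pow_succ]
      exact Ideal.mul_mem_mul hz hq
  obtain ⟨z, hz⟩ := this n
  rw [hJ, Ideal.mem_bot] at hz
  exact ⟨z, sub_eq_zero.1 hz⟩

end HS

namespace HS

open Polynomial

/-- raw terms for the Henselization -/
inductive Tm (R : Type u) [CommRing R] (K : Ideal R) : Type u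
  | of (r : R) : Tm R K
  | add (a b : Tm R K) : Tm R K
  | mul (a b : Tm R K) : Tm R K
  | neg (a : Tm R K) : Tm R K
  | root (m d : ℕ) (i : Fin m → K) (t : Fin m → Fin d → Tm R K) : Tm R K

/-- Henselian targets -/
structure Tgt (R : Type u) [CommRing R] (K : Ideal R) : Type (u + 1) where
  C : Type u
  [ring : CommRing C]
  J : Ideal C
  hens : HenselianRing C J
  f : R →+* C
  hf : K.map f ≤ J

attribute [instance] Tgt.ring

/-- evaluation -/
noncomputable def Tm.ev {R : Type u} [CommRing R] {K : Ideal R} (Y : Tgt R K) : Tm R K → Y.C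
  | .of r => Y.f r
  | .add a b => a.ev Y + b.ev Y
  | .mul a b => a.ev Y * b.ev Y
  | .neg a => - a.ev Y
  | .root m d i t => Classical.epsilon
      (fun z => z = 1 + ∑ s : Fin m, ∑ l : Fin d, Y.f (i s) * (t s l).ev Y * z ^ (l : ℕ))

/-- the polynomial of a root term -/
noncomputable def rp {S : Type*} [CommRing S] {m d : ℕ} (c : Fin m → S) (t : Fin m → Fin d → S) :
    S[X] := ∑ s : Fin m, ∑ l : Fin d, C (c s * t s l) * X ^ (l : ℕ)

theorem rp_eval {S : Type*} [CommRing S] {m d : ℕ} (c : Fin m → S) (t : Fin m → Fin d → S) (z : S) :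
    (rp c t).eval z = ∑ s : Fin m, ∑ l : Fin d, c s * t s l * z ^ (l : ℕ) := by
  simp [rp, eval_finsetSum]

theorem rp_map {S : Type*} [CommRing S] {J : Ideal S} {m d : ℕ} (c : Fin m → S)
    (t : Fin m → Fin d → S)
    (hc : ∀ s, c s ∈ J) : (rp c t).map (Ideal.Quotient.mk J) = 0 := by
  rw [rp, Polynomial.map_sum]
  refine Finset.sum_eq_zero fun s _ => ?_
  rw [Polynomial.map_sum]
  refine Finset.sum_eq_zero fun l _ => ?_
  simp [Ideal.Quotient.eq_zero_iff_mem.2 (hc s)]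

theorem Tm.ev_root {R : Type u} [CommRing R] {K : Ideal R} (Y : Tgt R K) {m d : ℕ}
    (i : Fin m → K) (t : Fin m → Fin d → Tm R K) :
    (Tm.root m d i t).ev Y = 1 + ∑ s : Fin m, ∑ l : Fin d,
      Y.f (i s) * (t s l).ev Y * ((Tm.root m d i t).ev Y) ^ (l : ℕ) := by
  have h : ∃ z : Y.C, z = 1 + ∑ s : Fin m, ∑ l : Fin d, Y.f (i s) * (t s l).ev Y * z ^ (l : ℕ) := by
    haveI := Y.hens
    obtain ⟨z, hz⟩ := HP.of_hens Y.J (rp (fun s => Y.f (i s)) (fun s l => (t s l).ev Y))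
      (rp_map _ _ fun s => Y.hf (Ideal.mem_map_of_mem _ (i s).2))
    refine ⟨z, ?_⟩
    rwa [rp_eval] at hz
  have := Classical.epsilon_spec h
  rw [← Tm.ev] at this
  exact this

/-- The big Henselization -/
noncomputable def Hb (R : Type u) [CommRing R] (K : Ideal R) : Subring (∀ Y : Tgt R K, Y.C) where
  carrier := Set.range fun (t : Tm R K) (Y : Tgt R K) => t.ev Y
  mul_mem' := by
    rintro _ _ ⟨a, rfl⟩ ⟨b, rfl⟩
    exact ⟨.mul a b, by ext Y; simp [Tm.ev]⟩
  one_mem' := ⟨.of 1, by ext Y; simp [Tm.ev]⟩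
  add_mem' := by
    rintro _ _ ⟨a, rfl⟩ ⟨b, rfl⟩
    exact ⟨.add a b, by ext Y; simp [Tm.ev]⟩
  zero_mem' := ⟨.of 0, by ext Y; simp [Tm.ev]⟩
  neg_mem' := by
    rintro _ ⟨a, rfl⟩
    exact ⟨.neg a, by ext Y; simp [Tm.ev]⟩

instance (R : Type u) [CommRing R] (K : Ideal R) : Small.{u} (Hb R K) :=
  inferInstanceAs (Small.{u} (Set.range fun (t : Tm R K) (Y : Tgt R K) => t.ev Y))

/-- class of a term -/
noncomputable def Hb.mk {R : Type u} [CommRing R] {K : Ideal R} (t : Tm R K) : Hb R K :=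
  ⟨fun Y => t.ev Y, t, rfl⟩

/-- projection -/
noncomputable def Hb.pr {R : Type u} [CommRing R] {K : Ideal R} (Y : Tgt R K) : Hb R K →+* Y.C :=
  (Pi.evalRingHom _ Y).comp (Hb R K).subtype

theorem Hb.pr_mk {R : Type u} [CommRing R] {K : Ideal R} (Y : Tgt R K) (t : Tm R K) :
    Hb.pr Y (Hb.mk t) = t.ev Y := rfl

theorem Hb.ext' {R : Type u} [CommRing R] {K : Ideal R} {a b : Hb R K}
    (h : ∀ Y, Hb.pr Y a = Hb.pr Y b) : a = b :=
  Subtype.ext (funext h)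

theorem Hb.mk_surj {R : Type u} [CommRing R] {K : Ideal R} (a : Hb R K) : ∃ t, Hb.mk t = a := by
  obtain ⟨_, t, rfl⟩ := a
  exact ⟨t, rfl⟩

/-- structure map -/
noncomputable def Hb.rho (R : Type u) [CommRing R] (K : Ideal R) : R →+* Hb R K where
  toFun r := Hb.mk (.of r)
  map_one' := Hb.ext' fun Y => by simp [Hb.pr_mk, Tm.ev]
  map_zero' := Hb.ext' fun Y => by simp [Hb.pr_mk, Tm.ev]
  map_mul' a b := Hb.ext' fun Y => by simp [Hb.pr_mk, Tm.ev]
  map_add' a b := Hb.ext' fun Y => by simp [Hb.pr_mk, Tm.ev]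

theorem Hb.pr_rho {R : Type u} [CommRing R] {K : Ideal R} (Y : Tgt R K) (r : R) :
    Hb.pr Y (Hb.rho R K r) = Y.f r := rfl

theorem Hb.mk_root {R : Type u} [CommRing R] {K : Ideal R} {m d : ℕ}
    (i : Fin m → K) (t : Fin m → Fin d → Tm R K) :
    (Hb.mk (.root m d i t)) = 1 + ∑ s : Fin m, ∑ l : Fin d,
      Hb.rho R K (i s) * Hb.mk (t s l) * (Hb.mk (.root m d i t)) ^ (l : ℕ) := by
  refine Hb.ext' fun Y => ?_
  simp only [map_add, map_one, map_sum, map_mul, map_pow, Hb.pr_mk, Hb.pr_rho]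
  exact Tm.ev_root Y i t

theorem Hb.hens (R : Type u) [CommRing R] (K : Ideal R) :
    HenselianRing (Hb R K) (K.map (Hb.rho R K)) := by
  apply HP.hens
  intro G hG
  have h1 : G ∈ (K.map (Hb.rho R K)).map (C : Hb R K →+* (Hb R K)[X]) := by
    rw [Ideal.mem_map_C_iff]
    exact coeff_mem hG
  rw [Ideal.map_map, Ideal.map, Ideal.span, Submodule.mem_span_set'] at h1
  obtain ⟨m, F, g, hF⟩ := h1
  have h2 : ∀ s, ∃ i : K, (g s : (Hb R K)[X]) = C (Hb.rho R K i) := by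
    intro s
    obtain ⟨i, hi, h⟩ := (g s).2
    exact ⟨⟨i, hi⟩, h.symm⟩
  choose i hi using h2
  let d := (Finset.univ.sup fun s => (F s).natDegree) + 1
  have hd : ∀ s, (F s).natDegree < d := fun s =>
    Nat.lt_succ_of_le (Finset.le_sup (f := fun s => (F s).natDegree) (Finset.mem_univ s))
  choose τ hτ using Hb.mk_surj (R := R) (K := K)
  refine ⟨Hb.mk (.root m d i fun s l => τ ((F s).coeff l)), ?_⟩
  conv_lhs => rw [Hb.mk_root]
  congr 1
  rw [← hF, eval_finsetSum]
  refine Finset.sum_congr rfl fun s _ => ?_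
  rw [hi, smul_eq_mul, eval_mul, eval_C, eval_eq_sum_range' (hd s), Finset.sum_mul,
    Finset.sum_range]
  refine Finset.sum_congr rfl fun l _ => ?_
  rw [hτ]; ring

theorem Hb.unique {R : Type u} [CommRing R] {K : Ideal R} (Y : Tgt R K) (g : Hb R K →+* Y.C)
    (hg : g.comp (Hb.rho R K) = Y.f) : g = Hb.pr Y := by
  have h0 : ∀ r, g (Hb.rho R K r) = Y.f r := fun r => by rw [← hg]; rfl
  have key : ∀ t : Tm R K, g (Hb.mk t) = t.ev Y := by
    intro t
    induction t with
    | of r => exact h0 r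
    | add a b iha ihb =>
      rw [Tm.ev, ← iha, ← ihb, ← map_add]
      exact congrArg g (Hb.ext' fun Y => by simp [Hb.pr_mk, Tm.ev])
    | mul a b iha ihb =>
      rw [Tm.ev, ← iha, ← ihb, ← map_mul]
      exact congrArg g (Hb.ext' fun Y => by simp [Hb.pr_mk, Tm.ev])
    | neg a iha =>
      rw [Tm.ev, ← iha, ← map_neg]
      exact congrArg g (Hb.ext' fun Y => by simp [Hb.pr_mk, Tm.ev])
    | root m d i t ih =>
      refine fix_unique (J := Y.J) Y.hens.jac (G := rp (fun s => Y.f (i s)) (fun s l => (t s l).ev Y))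
        (rp_map _ _ fun s => Y.hf (Ideal.mem_map_of_mem _ (i s).2)) ?_ ?_
      · rw [rp_eval]
        conv_lhs => rw [Hb.mk_root]
        simp only [map_add, map_one, map_sum, map_mul, map_pow, h0, ih]
      · rw [rp_eval]
        exact Tm.ev_root Y i t
  ext a
  obtain ⟨t, rfl⟩ := Hb.mk_surj a
  exact key t

theorem exists_henselization (R : Type u) [CommRing R] (K : Ideal R) :
    ∃ (H : Type u) (_ : CommRing H) (ρ : R →+* H), IsHenselization K ρ := by
  let e : Shrink.{u} (Hb R K) ≃+* Hb R K := Shrink.ringEquiv (Hb R K)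
  refine ⟨Shrink.{u} (Hb R K), inferInstance, (e.symm : Hb R K →+* _).comp (Hb.rho R K), ?_, ?_⟩
  · rw [← Ideal.map_map]
    exact hens_surj (Hb.hens R K) _ e.symm.surjective
  · intro C _ J hC f hf
    let Y : Tgt R K := { C := C, J := J, hens := hC, f := f, hf := hf }
    refine ⟨(Hb.pr Y).comp (e : _ →+* Hb R K), ?_, ?_⟩
    · ext r
      simp
      rfl
    · intro g hg
      have := Hb.unique Y (g.comp (e.symm : Hb R K →+* _)) (by rw [RingHom.comp_assoc]; exact hg)
      rw [← this, RingHom.comp_assoc]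
      simp

end HS

namespace HS

open Polynomial

theorem henselization_comparison {R H : Type u} [CommRing R] [CommRing H] {K : Ideal R}
    {ρ : R →+* H} (hρ : IsHenselization K ρ) (r : ℕ) :
    (∀ z, ρ z ∈ (K ^ r).map ρ → z ∈ K ^ r) ∧ ∀ h : H, ∃ x, h - ρ x ∈ (K ^ r).map ρ := by
  set q := Ideal.Quotient.mk (K ^ r) with hq
  have h1 : (K.map q) ^ r = ⊥ := by
    rw [← Ideal.map_pow, hq, Ideal.map_quotient_self]
  obtain ⟨g, hg, -⟩ := hρ.2 (R ⧸ K ^ r) (K.map q) (hens_nil h1) q le_rfl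
  have hg' : ∀ x, g (ρ x) = q x := fun x => by rw [← hg]; rfl
  constructor
  · intro z hz
    have := Ideal.mem_map_of_mem g hz
    rw [Ideal.map_map, hg, hq, Ideal.map_quotient_self, Ideal.mem_bot] at this
    have h2 : q z = 0 := by rw [← hg']; exact this
    exact Ideal.Quotient.eq_zero_iff_mem.1 h2
  · intro h
    let D := H ⧸ (K ^ r).map ρ
    let m : H →+* D := Ideal.Quotient.mk _
    let φ : R ⧸ K ^ r →+* D := Ideal.Quotient.lift _ (m.comp ρ) (fun a ha =>
      Ideal.Quotient.eq_zero_iff_mem.2 (Ideal.mem_map_of_mem _ ha))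
    have hD : HenselianRing D ((K.map ρ).map m) := hens_surj hρ.1 m Ideal.Quotient.mk_surjective
    obtain ⟨_, _, hu⟩ := hρ.2 D _ hD (m.comp ρ) (by rw [Ideal.map_map])
    have e1 := hu m rfl
    have e2 := hu (φ.comp g) (by
      change (φ.comp g).comp ρ = m.comp ρ
      rw [RingHom.comp_assoc, hg]
      ext x; rfl)
    obtain ⟨x, hx⟩ := Ideal.Quotient.mk_surjective (g h)
    refine ⟨x, ?_⟩
    rw [← Ideal.Quotient.eq]
    change m h = m (ρ x)
    have : m h = φ (g h) := by rw [e1, ← e2]; rfl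
    rw [this, ← hx]; rfl

/-- uniqueness of maps out of a finite type algebra surjected upon modulo an ideal -/
theorem eq_of_agree {P R C : Type*} [CommRing P] [CommRing R] [CommRing C] [Algebra P R]
    [Algebra.FiniteType P R] (I : Ideal P) (hsurj : ∀ x : R, ∃ p : P, x - algebraMap P R p ∈
      I.map (algebraMap P R)) (f g : R →+* C)
    (hfg : f.comp (algebraMap P R) = g.comp (algebraMap P R))
    (hC : I.map (f.comp (algebraMap P R)) ≤ Ideal.jacobson ⊥) : f = g := by
  have hfg' : ∀ p, f (algebraMap P R p) = g (algebraMap P R p) := fun p => RingHom.congr_fun hfg p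
  obtain ⟨s, hs⟩ := Algebra.FiniteType.out (R := P) (A := R)
  let D : Ideal C := Ideal.span ((fun x => f x - g x) '' (s : Set R))
  let π := Ideal.Quotient.mk D
  have h1 : ∀ x, f x - g x ∈ D := by
    intro x
    have hx : x ∈ Algebra.adjoin P (s : Set R) := by rw [hs]; trivial
    induction hx using Algebra.adjoin_induction with
    | mem x hx => exact Ideal.subset_span ⟨x, hx, rfl⟩
    | algebraMap p => rw [hfg', sub_self]; exact zero_mem _
    | add x y _ _ hx hy =>
      rw [map_add, map_add, add_sub_add_comm]; exact add_mem hx hy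
    | mul x y _ _ hx hy =>
      have : f (x * y) - g (x * y) = f x * (f y - g y) + g y * (f x - g x) := by
        rw [map_mul, map_mul]; ring
      rw [this]
      exact add_mem (Ideal.mul_mem_left _ _ hy) (Ideal.mul_mem_left _ _ hx)
  have hDfg : D.FG := Submodule.fg_span ((s.finite_toSet).image _)
  have h2 : ∀ x ∈ I.map (algebraMap P R), f x - g x ∈ I.map (f.comp (algebraMap P R)) • D := by
    intro x hx
    induction hx using Submodule.span_induction with
    | mem x hx =>
      obtain ⟨p, _, rfl⟩ := hx
      rw [hfg', sub_self]; exact zero_mem _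
    | zero => simp
    | add x y _ _ hx hy => rw [map_add, map_add, add_sub_add_comm]; exact add_mem hx hy
    | smul a x hx0 hx =>
      have : f (a • x) - g (a • x) = f x * (f a - g a) + g a * (f x - g x) := by
        rw [smul_eq_mul, map_mul, map_mul]; ring
      rw [this]
      refine add_mem (Submodule.smul_mem_smul ?_ (h1 a)) (Ideal.mul_mem_left _ _ hx)
      rw [← Ideal.map_map]
      exact Ideal.mem_map_of_mem f hx0
  have h3 : D ≤ I.map (f.comp (algebraMap P R)) • D := by
    rw [Ideal.span_le]
    rintro _ ⟨x, -, rfl⟩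
    obtain ⟨p, hp⟩ := hsurj x
    have := h2 _ hp
    simp only [map_sub, hfg'] at this
    simpa using this
  have h4 : D = ⊥ := Submodule.eq_bot_of_le_smul_of_le_jacobson_bot _ _ hDfg h3 hC
  ext x
  have := h1 x
  rw [h4, Ideal.mem_bot] at this
  exact sub_eq_zero.1 this

/-- Unramified kernels -/
theorem ker_le_sq {P Q Q' : Type*} [CommRing P] [CommRing Q] [CommRing Q'] [Algebra P Q]
    [Algebra P Q'] [Algebra Q Q'] [IsScalarTower P Q Q'] (Δ : Q) [IsLocalization.Away Δ Q']
    [Algebra.FormallyUnramified P Q'] (q : Ideal Q) (hΔ : IsUnit (Ideal.Quotient.mk q Δ))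
    (hsurj : ∀ x : Q, ∃ p : P, x - algebraMap P Q p ∈ q) :
    q ≤ q ^ 2 ⊔ (q.comap (algebraMap P Q)).map (algebraMap P Q) := by
  set m := q ^ 2 ⊔ (q.comap (algebraMap P Q)).map (algebraMap P Q) with hm
  have hmq : m ≤ q := sup_le (Ideal.pow_le_self two_ne_zero) Ideal.map_comap_le
  let g : Q ⧸ m →+* Q ⧸ q := Ideal.Quotient.factor hmq
  have hsq : (q.map (Ideal.Quotient.mk m)) ^ 2 = ⊥ := by
    rw [← Ideal.map_pow, Ideal.map_eq_bot_iff_le_ker, Ideal.mk_ker]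
    exact le_sup_left
  -- the second map
  let c : P →+* Q ⧸ q := (Ideal.Quotient.mk q).comp (algebraMap P Q)
  have hc : Function.Surjective c := by
    intro y
    obtain ⟨x, rfl⟩ := Ideal.Quotient.mk_surjective y
    obtain ⟨p, hp⟩ := hsurj x
    exact ⟨p, (Ideal.Quotient.eq.2 hp).symm⟩
  let s : Q ⧸ q →+* Q ⧸ m := RingHom.liftOfSurjective c hc
    ⟨(Ideal.Quotient.mk m).comp (algebraMap P Q), by
      intro p hp
      rw [RingHom.mem_ker] at hp ⊢
      refine Ideal.Quotient.eq_zero_iff_mem.2 ?_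
      refine (le_sup_right : _ ≤ m) (Ideal.mem_map_of_mem _ ?_)
      change algebraMap P Q p ∈ q
      exact Ideal.Quotient.eq_zero_iff_mem.1 hp⟩
  have hsc : ∀ p, s (Ideal.Quotient.mk q (algebraMap P Q p)) =
      Ideal.Quotient.mk m (algebraMap P Q p) := by
    intro p
    exact RingHom.liftOfRightInverse_comp_apply _ _ _ _ p
  have hs1 : ∀ y, Ideal.Quotient.factor hmq (s y) = y := by
    intro y
    obtain ⟨p, rfl⟩ := hc y
    change Ideal.Quotient.factor hmq (s (Ideal.Quotient.mk q (algebraMap P Q p))) = _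
    rw [hsc]; rfl
  let f1 : Q →ₐ[P] Q ⧸ m := Ideal.Quotient.mkₐ P m
  let f2 : Q →ₐ[P] Q ⧸ m := { s.comp (Ideal.Quotient.mk q) with
    commutes' := fun p => hsc p }
  have hu2 : IsUnit (f2 Δ) := hΔ.map s
  have hu1 : IsUnit (f1 Δ) := by
    refine isUnit_of_mk (J := q.map (Ideal.Quotient.mk m)) (hens_nil hsq).jac ?_
    have : Ideal.Quotient.mk (q.map (Ideal.Quotient.mk m)) (f1 Δ) =
        Ideal.Quotient.mk (q.map (Ideal.Quotient.mk m)) (f2 Δ) := by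
      rw [Ideal.Quotient.eq]
      obtain ⟨p, hp⟩ := hsurj Δ
      have e : f2 Δ = Ideal.Quotient.mk m (algebraMap P Q p) := by
        rw [← hsc]
        exact congrArg s (Ideal.Quotient.eq.2 hp)
      rw [e]
      change Ideal.Quotient.mk m Δ - _ ∈ _
      rw [← map_sub]
      exact Ideal.mem_map_of_mem _ hp
    rw [this]
    exact hu2.map _
  let F1 : Q' →ₐ[P] Q ⧸ m := IsLocalization.liftAlgHom (M := Submonoid.powers Δ) (f := f1) (by
    rintro ⟨_, n, rfl⟩; simpa using hu1.pow n)
  let F2 : Q' →ₐ[P] Q ⧸ m := IsLocalization.liftAlgHom (M := Submonoid.powers Δ) (f := f2) (by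
    rintro ⟨_, n, rfl⟩; simpa using hu2.pow n)
  have hF1 : ∀ x, F1 (algebraMap Q Q' x) = f1 x := fun x => by simp [F1]
  have hF2 : ∀ x, F2 (algebraMap Q Q' x) = f2 x := fun x => by simp [F2]
  have key : F1 = F2 := by
    refine Algebra.FormallyUnramified.ext (q.map (Ideal.Quotient.mk m)) ⟨2, hsq⟩ ?_
    have : (Ideal.Quotient.mkₐ P (q.map (Ideal.Quotient.mk m))).comp F1 =
        (Ideal.Quotient.mkₐ P (q.map (Ideal.Quotient.mk m))).comp F2 := by
      refine IsLocalization.algHom_ext (Submonoid.powers Δ) ?_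
      ext x
      simp only [AlgHom.comp_apply]
      change Ideal.Quotient.mk _ (F1 (algebraMap Q Q' x)) = Ideal.Quotient.mk _ (F2 (algebraMap Q Q' x))
      rw [hF1, hF2, Ideal.Quotient.eq]
      obtain ⟨p, hp⟩ := hsurj x
      have e : f2 x = Ideal.Quotient.mk m (algebraMap P Q p) := by
        rw [← hsc]
        exact congrArg s (Ideal.Quotient.eq.2 hp)
      rw [e]
      change Ideal.Quotient.mk m x - _ ∈ _
      rw [← map_sub]
      exact Ideal.mem_map_of_mem _ hp
    exact fun x => AlgHom.congr_fun this x
  intro x hx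
  have e1 : f1 x = f2 x := by rw [← hF1, ← hF2, key]
  have e2 : f2 x = 0 := by
    change s (Ideal.Quotient.mk q x) = 0
    rw [Ideal.Quotient.eq_zero_iff_mem.2 hx, map_zero]
  rw [e2] at e1
  exact Ideal.Quotient.eq_zero_iff_mem.1 e1

end HS

namespace HS

open Polynomial

theorem exists_fg_le {P Q : Type*} [CommRing P] [CommRing Q] [Algebra P Q]
    [Algebra.FiniteType P Q] (q : Ideal Q)
    (hsurj : ∀ x : Q, ∃ p : P, x - algebraMap P Q p ∈ q) :
    ∃ q0 : Ideal Q, q0.FG ∧ q0 ≤ q ∧ q ≤ q0 ⊔ (q.comap (algebraMap P Q)).map (algebraMap P Q) := by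
  obtain ⟨s, hs⟩ := Algebra.FiniteType.out (R := P) (A := Q)
  choose c hc using hsurj
  let q0 : Ideal Q := Ideal.span ((fun x => x - algebraMap P Q (c x)) '' (s : Set Q))
  have h0 : q0 ≤ q := by
    rw [Ideal.span_le]
    rintro _ ⟨x, -, rfl⟩
    exact hc x
  refine ⟨q0, Submodule.fg_span ((s.finite_toSet).image _), h0, ?_⟩
  have h1 : ∀ x, ∃ p, x - algebraMap P Q p ∈ q0 := by
    intro x
    have hx : x ∈ Algebra.adjoin P (s : Set Q) := by rw [hs]; trivial
    induction hx using Algebra.adjoin_induction with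
    | mem x hx => exact ⟨c x, Ideal.subset_span ⟨x, hx, rfl⟩⟩
    | algebraMap p => exact ⟨p, by rw [sub_self]; exact zero_mem _⟩
    | add x y _ _ hx hy =>
      obtain ⟨p, hp⟩ := hx
      obtain ⟨p', hp'⟩ := hy
      refine ⟨p + p', ?_⟩
      rw [map_add, add_sub_add_comm]; exact add_mem hp hp'
    | mul x y _ _ hx hy =>
      obtain ⟨p, hp⟩ := hx
      obtain ⟨p', hp'⟩ := hy
      refine ⟨p * p', ?_⟩
      have : x * y - algebraMap P Q (p * p') = x * (y - algebraMap P Q p') +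
        algebraMap P Q p' * (x - algebraMap P Q p) := by rw [map_mul]; ring
      rw [this]
      exact add_mem (Ideal.mul_mem_left _ _ hp') (Ideal.mul_mem_left _ _ hp)
  intro x hx
  obtain ⟨p, hp⟩ := h1 x
  have : algebraMap P Q p ∈ q := by
    have := sub_mem hx (h0 hp)
    simpa using this
  have h3 := add_mem (Ideal.mem_sup_left (T := (q.comap (algebraMap P Q)).map (algebraMap P Q)) hp)
    (Ideal.mem_sup_right (Ideal.mem_map_of_mem (algebraMap P Q) (show p ∈ q.comap _ from this)))
  simpa using h3

theorem exists_t {Q : Type*} [CommRing Q] {q q0 N : Ideal Q} (h0 : q0.FG) (h0q : q0 ≤ q)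
    (h1 : q ≤ q0 ⊔ N) (h2 : q ≤ q ^ 2 ⊔ N) : ∃ t, t - 1 ∈ q ∧ ∀ x ∈ q, t * x ∈ N := by
  have h3 : q0 ≤ N ⊔ q • q0 := by
    refine h0q.trans (h2.trans (sup_le ?_ le_sup_left))
    rw [pow_two]
    have e1 : q * q ≤ q * (q0 ⊔ N) := Ideal.mul_mono_right h1
    rw [Ideal.mul_sup] at e1
    have e2 : q * N ≤ N := Ideal.mul_le_right
    rw [smul_eq_mul]
    exact e1.trans (sup_le le_sup_right (e2.trans le_sup_left))
  obtain ⟨t, ht, h⟩ := Submodule.exists_sub_one_mem_and_smul_le_of_fg_of_le_sup h0 le_rfl h3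
  refine ⟨t, ht, fun x hx => ?_⟩
  obtain ⟨y, hy, z, hz, rfl⟩ := Submodule.mem_sup.1 (h1 hx)
  rw [mul_add]
  exact add_mem (h (Submodule.smul_mem_pointwise_smul y t q0 hy)) (Ideal.mul_mem_left _ _ hz)

theorem finite_poly {B F : Type*} [CommRing B] [CommRing F] [Algebra B F] [Module.Finite B F]
    (I : Ideal B) (hI : I ≤ Ideal.jacobson ⊥) (b : F)
    (hb : ∀ x : F, ∃ c : B, b * x - algebraMap B F c * b ∈ I.map (algebraMap B F))
    (hbb : b * b - b ∈ I.map (algebraMap B F)) :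
    ∃ (G : B[X]) (m : ℕ), G.Monic ∧ aeval b G = 0 ∧
      G.map (Ideal.Quotient.mk I) = (X - 1) * X ^ m := by
  classical
  obtain ⟨S, hS⟩ := Module.Finite.fg_top (R := B) (M := F)
  let x : Option S → F := fun o => o.elim b (fun y => (1 - b) * y)
  have hIF : ∀ z, z ∈ I.map (algebraMap B F) ↔ z ∈ (I • ⊤ : Submodule B F) := by
    intro z
    rw [Ideal.smul_top_eq_map]; rfl
  have hx : Submodule.span B (Set.range x) = ⊤ := by
    rw [eq_top_iff]
    refine Submodule.le_of_le_smul_of_le_jacobson_bot Module.Finite.fg_top hI ?_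
    rintro z -
    have h1 : z = b * z + (1 - b) * z := by ring
    rw [h1]
    refine add_mem ?_ (Submodule.mem_sup_left ?_)
    · obtain ⟨c, hc⟩ := hb z
      have h2 : b * z = c • b + (b * z - algebraMap B F c * b) := by
        rw [Algebra.smul_def]; ring
      rw [h2]
      refine add_mem (Submodule.mem_sup_left (Submodule.smul_mem _ _ (Submodule.subset_span ⟨none, rfl⟩)))
        (Submodule.mem_sup_right ((hIF _).1 hc))
    · have hz : z ∈ Submodule.span B (S : Set F) := by rw [hS]; trivial
      induction hz using Submodule.span_induction with
      | mem y hy => exact Submodule.subset_span ⟨some ⟨y, hy⟩, rfl⟩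
      | zero => simp
      | add y z _ _ hy hz => rw [mul_add]; exact add_mem (hy (by ring)) (hz (by ring))
      | smul a y _ hy => rw [mul_smul_comm]; exact Submodule.smul_mem _ _ (hy (by ring))
  have hI' : ∀ z ∈ I.map (algebraMap B F), ∃ a : Option S → B, (∀ j, a j ∈ I) ∧
      ∑ j, a j • x j = z := by
    intro z hz
    rw [hIF, ← hx, Submodule.mem_ideal_smul_span_iff_exists_sum] at hz
    obtain ⟨a, ha, h⟩ := hz
    refine ⟨a, ha, ?_⟩
    rw [← h, Finsupp.sum_fintype]
    simp
  let d : Option S → B := fun o => o.elim 1 (fun _ => 0)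
  have hd : ∀ i, b * x i - d i • x i ∈ I.map (algebraMap B F) := by
    rintro (_ | y)
    · simpa [x, d] using hbb
    · have : b * x (some y) - d (some y) • x (some y) = - y * (b * b - b) := by
        simp [x, d]; ring
      rw [this]
      exact Ideal.mul_mem_left _ _ hbb
  choose a ha hax using fun i => hI' _ (hd i)
  let β : Matrix (Option S) (Option S) B := Matrix.diagonal d + Matrix.of a
  refine ⟨β.charpoly, Fintype.card S, β.charpoly_monic, ?_, ?_⟩
  · have h1 : (aeval b β.charpoly) = ((Matrix.scalar _ b) - β.map (algebraMap B F)).det := by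
      rw [← Matrix.eval_charpoly, Matrix.charpoly_map, eval_map_algebraMap]
    set M := (Matrix.scalar _ b) - β.map (algebraMap B F) with hM
    have h2 : M.mulVec x = 0 := by
      ext i
      rw [hM, Matrix.sub_mulVec]
      have h3 : (Matrix.mulVec (β.map (algebraMap B F)) x) i = d i • x i + ∑ j, a i j • x j := by
        simp only [Matrix.mulVec, dotProduct, β, Matrix.map_apply, Matrix.add_apply, Matrix.of_apply,
          map_add, add_mul, Finset.sum_add_distrib, Algebra.smul_def]
        congr 1
        rw [Finset.sum_eq_single i]
        · simp
        · intro j _ hj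
          simp [Matrix.diagonal_apply_ne _ (Ne.symm hj)]
        · simp
      rw [Pi.sub_apply, h3, hax]
      simp
    have h4 : ∀ i, M.det * x i = 0 := by
      intro i
      have := congrArg (fun v => Matrix.mulVec M.adjugate v i) h2
      simpa [Matrix.mulVec_mulVec, Matrix.adjugate_mul, Matrix.smul_mulVec] using this
    have h5 : ∀ z, M.det * z = 0 := by
      intro z
      have hz : z ∈ Submodule.span B (Set.range x) := by rw [hx]; trivial
      induction hz using Submodule.span_induction with
      | mem y hy => obtain ⟨i, rfl⟩ := hy; exact h4 i
      | zero => simp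
      | add y z _ _ hy hz => rw [mul_add, hy, hz, add_zero]
      | smul a y _ hy => rw [mul_smul_comm, hy, smul_zero]
    rw [h1]
    simpa using h5 1
  · rw [← Matrix.charpoly_map]
    have : β.map (Ideal.Quotient.mk I) = Matrix.diagonal (fun i => Ideal.Quotient.mk I (d i)) := by
      ext i j
      have := Ideal.Quotient.eq_zero_iff_mem.2 (ha i j)
      by_cases hij : i = j
      · subst hij; simp [β, this]
      · simp [β, this, Matrix.diagonal_apply_ne _ hij]
    rw [this, Matrix.charpoly_diagonal, Fintype.prod_option]
    simp [d]

end HS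

namespace HS

open Polynomial

theorem exists_idem {B F : Type*} [CommRing B] [CommRing F] [Algebra B F] [Module.Finite B F]
    (I : Ideal B) [hB : HenselianRing B I] (φ : F →ₐ[B] B ⧸ I) (b : F) (hb1 : φ b = 1)
    (hb : ∀ x : F, φ x = 0 → b * x ∈ I.map (algebraMap B F)) :
    ∃ e : F, e * e = e ∧ φ e = 1 ∧ ∀ x, ∃ c : B, e * x = algebraMap B F c * e := by
  have hjac : I ≤ Ideal.jacobson ⊥ := hB.jac
  have hb' : ∀ x : F, ∃ c : B, b * x - algebraMap B F c * b ∈ I.map (algebraMap B F) := by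
    intro x
    obtain ⟨c, hc⟩ := Ideal.Quotient.mk_surjective (φ x)
    refine ⟨c, ?_⟩
    have := hb (x - algebraMap B F c) (by
      rw [map_sub, AlgHom.commutes, ← hc]; exact sub_self _)
    rw [mul_sub] at this
    rwa [mul_comm (algebraMap B F c)]
  have hbb : b * b - b ∈ I.map (algebraMap B F) := by
    have := hb (b - 1) (by rw [map_sub, hb1, map_one, sub_self])
    rwa [mul_sub, mul_one] at this
  obtain ⟨G, m, hG, hGb, hGI⟩ := finite_poly I hjac b hb' hbb
  have hder : ∀ a, a - 1 ∈ I → Ideal.Quotient.mk I (G.derivative.eval a) = 1 := by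
    intro a ha
    have ha' : Ideal.Quotient.mk I a = 1 := by
      rw [← map_one (Ideal.Quotient.mk I)]; exact Ideal.Quotient.eq.2 ha
    rw [← eval_map_apply, ← derivative_map, hGI, ha']
    simp
  obtain ⟨a, ha, ha1⟩ := hB.is_henselian G hG 1 (by
    rw [← Ideal.Quotient.eq_zero_iff_mem, ← eval_map_apply, hGI]; simp) (by
    rw [hder 1 (by simp)]; exact isUnit_one)
  have hau : IsUnit a := isUnit_of_sub_one_mem hjac ha1
  obtain ⟨q, hq⟩ := dvd_iff_isRoot.2 ha
  have hqa : IsUnit (q.eval a) := by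
    have h1 : G.derivative.eval a = q.eval a := by rw [hq]; simp
    refine isUnit_of_mk hjac ?_
    rw [← h1, hder a ha1]; exact isUnit_one
  obtain ⟨w, hw⟩ := hqa.exists_left_inv
  have hbq : b * aeval b q = algebraMap B F a * aeval b q := by
    have : aeval b ((X - C a) * q) = 0 := by rw [← hq]; exact hGb
    simp only [map_mul, map_sub, aeval_X, aeval_C] at this
    linear_combination this
  have hrq : ∀ r : B[X], aeval b r * aeval b q = algebraMap B F (r.eval a) * aeval b q := by
    intro r
    have h1 : (X - C a) ∣ r - C (r.eval a) := by
      rw [dvd_iff_isRoot]; simp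
    obtain ⟨s, hs⟩ := h1
    have h2 := congrArg (aeval b) hs
    simp only [map_mul, map_sub, aeval_X, aeval_C] at h2
    linear_combination aeval b q * h2 + aeval b s * hbq
  set e := algebraMap B F w * aeval b q with he
  have hwa : algebraMap B F w * algebraMap B F (q.eval a) = 1 := by rw [← map_mul, hw, map_one]
  have hee : e * e = e := by
    have := hrq q
    rw [he]
    linear_combination (algebraMap B F w) ^ 2 * this + algebraMap B F w * aeval b q * hwa
  have hφe : φ e = 1 := by
    have ha' : Ideal.Quotient.mk I a = 1 := by
      rw [← map_one (Ideal.Quotient.mk I)]; exact Ideal.Quotient.eq.2 ha1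
    have h1 : φ (aeval b q) = Ideal.Quotient.mk I (q.eval a) := by
      rw [← aeval_algHom_apply, hb1, ← ha', ← eval_map_apply, aeval_def, eval₂_eq_eval_map]; rfl
    rw [he, map_mul, AlgHom.commutes, h1]
    change Ideal.Quotient.mk I w * _ = 1
    rw [← map_mul, hw, map_one]
  have hbe : b * e = algebraMap B F a * e := by
    rw [he]; linear_combination algebraMap B F w * hbq
  refine ⟨e, hee, hφe, ?_⟩
  let N : Submodule B F := LinearMap.range (LinearMap.mulLeft B e)
  have hN : N ≤ Submodule.span B {e} := by
    refine Submodule.le_of_le_smul_of_le_jacobson_bot ?_ hjac ?_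
    · change (LinearMap.range (LinearMap.mulLeft B e)).FG
      rw [← Submodule.map_top]
      exact Module.Finite.fg_top.map _
    rintro _ ⟨x, rfl⟩
    obtain ⟨v, hv⟩ := hau.exists_left_inv
    obtain ⟨c, hc⟩ := hb' x
    have h1 : LinearMap.mulLeft B e x = c • e +
        v • (e * (b * x - algebraMap B F c * b)) := by
      have hv' : algebraMap B F v * algebraMap B F a = 1 := by rw [← map_mul, hv, map_one]
      simp only [LinearMap.mulLeft_apply, Algebra.smul_def]
      linear_combination (algebraMap B F v * algebraMap B F c - algebraMap B F v * x) * hbe +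
        (algebraMap B F c * e - e * x) * hv'
    rw [h1]
    refine add_mem (Submodule.mem_sup_left (Submodule.smul_mem _ _ (Submodule.mem_span_singleton_self e)))
      (Submodule.mem_sup_right (Submodule.smul_mem _ _ ?_))
    have h2 : (b * x - algebraMap B F c * b) ∈ (I • ⊤ : Submodule B F) := by
      rw [Ideal.smul_top_eq_map]; exact hc
    have h3 := Submodule.mem_map_of_mem (f := LinearMap.mulLeft B e) h2
    rwa [Submodule.map_smul'', Submodule.map_top] at h3
  intro x
  obtain ⟨c, hc⟩ := Submodule.mem_span_singleton.1 (hN ⟨x, rfl⟩)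
  refine ⟨c, ?_⟩
  rw [Algebra.smul_def] at hc
  exact hc.symm

theorem exists_section {B F F' : Type*} [CommRing B] [CommRing F] [CommRing F'] [Algebra B F]
    [Module.Finite B F] [Algebra.FinitePresentation B F] [Algebra B F'] [Algebra F F']
    [IsScalarTower B F F'] (Δ : F) [IsLocalization.Away Δ F'] [Algebra.FormallyEtale B F']
    (I : Ideal B) [hB : HenselianRing B I] (φ : F →ₐ[B] B ⧸ I) (hφΔ : IsUnit (φ Δ)) :
    ∃ l : F →ₐ[B] B, ∀ x, Ideal.Quotient.mk I (l x) = φ x := by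
  have hjac : I ≤ Ideal.jacobson ⊥ := hB.jac
  have hφc : ∀ c, φ (algebraMap B F c) = Ideal.Quotient.mk I c := fun c => φ.commutes c
  set q : Ideal F := RingHom.ker φ with hq
  have hsurj : ∀ x : F, ∃ p : B, x - algebraMap B F p ∈ q := by
    intro x
    obtain ⟨c, hc⟩ := Ideal.Quotient.mk_surjective (φ x)
    refine ⟨c, ?_⟩
    rw [hq, RingHom.mem_ker, map_sub, hφc, hc, sub_self]
  have hcomap : q.comap (algebraMap B F) = I := by
    ext c
    rw [Ideal.mem_comap, hq, RingHom.mem_ker, hφc, Ideal.Quotient.eq_zero_iff_mem]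
  obtain ⟨q0, hq0, hq0q, hqq0⟩ := exists_fg_le q hsurj
  have hqΔ : IsUnit (Ideal.Quotient.mk q Δ) := by
    obtain ⟨y, hy⟩ := hφΔ.exists_right_inv
    obtain ⟨c, rfl⟩ := Ideal.Quotient.mk_surjective y
    refine IsUnit.of_mul_eq_one (Ideal.Quotient.mk q (algebraMap B F c)) ?_
    rw [← map_mul, ← map_one (Ideal.Quotient.mk q), Ideal.Quotient.eq, hq, RingHom.mem_ker,
      map_sub, map_mul, hφc, hy, map_one, sub_self]
  have hsq := ker_le_sq (P := B) (Q' := F') Δ q hqΔ hsurj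
  rw [hcomap] at hqq0 hsq
  obtain ⟨b, hb1, hb⟩ := exists_t hq0 hq0q hqq0 hsq
  obtain ⟨e, hee, hφe, hex⟩ := exists_idem I φ b (by
    rw [hq, RingHom.mem_ker, map_sub, map_one, sub_eq_zero] at hb1; exact hb1) (fun x hx => hb x hx)
  let D : Ideal F := Ideal.span {1 - e}
  have hDφ : ∀ x ∈ D, φ x = 0 := by
    intro x hx
    obtain ⟨y, rfl⟩ := Ideal.mem_span_singleton'.1 hx
    rw [map_mul, map_sub, map_one, hφe, sub_self, mul_zero]
  have hF1 : Function.Surjective (algebraMap B (F ⧸ D)) := by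
    intro y
    obtain ⟨x, rfl⟩ := Ideal.Quotient.mk_surjective y
    obtain ⟨c, hc⟩ := hex x
    refine ⟨c, ?_⟩
    change Ideal.Quotient.mk D (algebraMap B F c) = _
    rw [Ideal.Quotient.eq]
    refine Ideal.mem_span_singleton'.2 ⟨algebraMap B F c - x, ?_⟩
    linear_combination hc
  have : Algebra.FinitePresentation B (F ⧸ D) :=
    Algebra.FinitePresentation.quotient (Submodule.fg_span_singleton _)
  let f : B →ₐ[B] F ⧸ D := Algebra.ofId B (F ⧸ D)
  set 𝔞 : Ideal B := RingHom.ker (f : B →+* F ⧸ D) with h𝔞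
  have h𝔞fg : 𝔞.FG := Algebra.FinitePresentation.ker_fG_of_surjective f hF1
  have h𝔞D : ∀ c ∈ 𝔞, algebraMap B F c ∈ D := by
    intro c hc
    exact Ideal.Quotient.eq_zero_iff_mem.1 hc
  have h𝔞I : 𝔞 ≤ I := by
    intro c hc
    have := hDφ _ (h𝔞D c hc)
    rwa [hφc, Ideal.Quotient.eq_zero_iff_mem] at this
  let ε : (B ⧸ 𝔞) ≃ₐ[B] F ⧸ D := Ideal.quotientKerAlgEquivOfSurjective (f := f) hF1
  let s : F →ₐ[B] B ⧸ 𝔞 := (ε.symm : F ⧸ D →ₐ[B] B ⧸ 𝔞).comp (Ideal.Quotient.mkₐ B D)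
  have hse : s e = 1 := by
    have : Ideal.Quotient.mk D e = 1 := by
      rw [← map_one (Ideal.Quotient.mk D), eq_comm, Ideal.Quotient.eq]
      exact Ideal.mem_span_singleton_self _
    change ε.symm (Ideal.Quotient.mk D e) = 1
    rw [this, map_one]
  have hsΔ : IsUnit (s Δ) := by
    obtain ⟨δ, hδ⟩ := Ideal.Quotient.mk_surjective (s Δ)
    have h1 : Δ - algebraMap B F δ ∈ D := by
      have : s Δ = s (algebraMap B F δ) := by rw [AlgHom.commutes, ← hδ]; rfl
      exact Ideal.Quotient.eq.1 (ε.symm.injective this)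
    have h2 := hDφ _ h1
    rw [map_sub, hφc, sub_eq_zero] at h2
    rw [h2] at hφΔ
    rw [← hδ]
    exact (isUnit_of_mk hjac hφΔ).map _
  let s' : F' →ₐ[B] B ⧸ 𝔞 := IsLocalization.liftAlgHom (M := Submonoid.powers Δ) (f := s) (by
    rintro ⟨_, n, rfl⟩; simpa using hsΔ.pow n)
  have hs' : ∀ x, s' (algebraMap F F' x) = s x := fun x => by simp [s']
  have hle : 𝔞 ^ 2 ≤ 𝔞 := Ideal.pow_le_self two_ne_zero
  let g : (B ⧸ 𝔞 ^ 2) →ₐ[B] B ⧸ 𝔞 := Ideal.Quotient.factorₐ B hle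
  have hg : Function.Surjective g := Ideal.Quotient.factor_surjective hle
  have hker : RingHom.ker (g : (B ⧸ 𝔞 ^ 2) →+* B ⧸ 𝔞) = 𝔞.map (Ideal.Quotient.mk (𝔞 ^ 2)) := by
    exact Ideal.Quotient.factor_ker hle
  have hnil : (RingHom.ker (g : (B ⧸ 𝔞 ^ 2) →+* B ⧸ 𝔞)) ^ 2 = ⊥ := by
    rw [hker, ← Ideal.map_pow, Ideal.map_quotient_self]
  let L : F' →ₐ[B] B ⧸ 𝔞 ^ 2 := Algebra.FormallySmooth.liftOfSurjective s' g hg ⟨2, hnil⟩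
  have hL : ∀ x, g (L x) = s' x := fun x =>
    Algebra.FormallySmooth.liftOfSurjective_apply _ _ _ _ _
  let l : F →ₐ[B] B ⧸ 𝔞 ^ 2 := L.comp (IsScalarTower.toAlgHom B F F')
  have hl : ∀ x, g (l x) = s x := fun x => (hL _).trans (hs' x)
  have hle1 : l e = 1 := by
    have h1 : (1 - l e) * (1 - l e) = 1 - l e := by
      have : l e * l e = l e := by rw [← map_mul, hee]
      linear_combination this
    have h2 : (1 - l e) ∈ RingHom.ker (g : (B ⧸ 𝔞 ^ 2) →+* B ⧸ 𝔞) := by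
      rw [RingHom.mem_ker]
      change g (1 - l e) = 0
      rw [map_sub, hl, hse, map_one, sub_self]
    have h3 := Ideal.mul_mem_mul h2 h2
    rw [← pow_two, hnil, Ideal.mem_bot, h1, sub_eq_zero] at h3
    exact h3.symm
  have h𝔞2 : 𝔞 ≤ I • 𝔞 := by
    intro c hc
    obtain ⟨y, hy⟩ := Ideal.mem_span_singleton'.1 (h𝔞D c hc)
    have h1 : l (algebraMap B F c) = 0 := by
      rw [← hy, map_mul, map_sub, map_one, hle1, sub_self, mul_zero]
    rw [AlgHom.commutes] at h1
    have h2 : c ∈ 𝔞 ^ 2 := Ideal.Quotient.eq_zero_iff_mem.1 h1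
    rw [pow_two] at h2
    exact Ideal.mul_mono_left h𝔞I h2
  have h𝔞0 : 𝔞 = ⊥ := Submodule.eq_bot_of_le_smul_of_le_jacobson_bot _ _ h𝔞fg h𝔞2 hjac
  have hbij : Function.Bijective f := ⟨(RingHom.injective_iff_ker_eq_bot (f : B →+* F ⧸ D)).2 h𝔞0, hF1⟩
  let ε' : B ≃ₐ[B] F ⧸ D := AlgEquiv.ofBijective f hbij
  refine ⟨(ε'.symm : F ⧸ D →ₐ[B] B).comp (Ideal.Quotient.mkₐ B D), fun x => ?_⟩
  set c := ((ε'.symm : F ⧸ D →ₐ[B] B).comp (Ideal.Quotient.mkₐ B D)) x with hc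
  have h1 : ε' c = Ideal.Quotient.mk D x := by
    rw [hc]; exact ε'.apply_symm_apply _
  have h2 : Ideal.Quotient.mk D (algebraMap B F c) = Ideal.Quotient.mk D x := h1
  rw [Ideal.Quotient.eq] at h2
  have := hDφ _ h2
  rw [map_sub, hφc, sub_eq_zero] at this
  exact this

end HS

namespace HS

open Polynomial

theorem exists_section' {B F F' : Type*} [CommRing B] [CommRing F] [CommRing F'] [Algebra B F]
    [Module.Finite B F] [Algebra.FinitePresentation B F] [Algebra B F'] [Algebra F F']
    [IsScalarTower B F F'] (Δ : F) [IsLocalization.Away Δ F'] [Algebra.FormallyEtale B F']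
    (I : Ideal B) [hB : HenselianRing B I] (φ : F' →ₐ[B] B ⧸ I) :
    ∃ l : F' →ₐ[B] B, (Ideal.Quotient.mkₐ B I).comp l = φ := by
  have hjac : I ≤ Ideal.jacobson ⊥ := hB.jac
  obtain ⟨l, hl⟩ := exists_section (F' := F') Δ I (φ.comp (IsScalarTower.toAlgHom B F F'))
    ((IsLocalization.Away.algebraMap_isUnit Δ).map φ)
  have hlΔ : IsUnit (l Δ) := by
    refine isUnit_of_mk hjac ?_
    rw [hl]
    exact (IsLocalization.Away.algebraMap_isUnit Δ).map φ
  let L : F' →ₐ[B] B := IsLocalization.liftAlgHom (M := Submonoid.powers Δ) (f := l) (by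
    rintro ⟨_, n, rfl⟩; simpa using hlΔ.pow n)
  have hL : ∀ x, L (algebraMap F F' x) = l x := fun x => by simp [L]
  refine ⟨L, ?_⟩
  refine IsLocalization.algHom_ext (Submonoid.powers Δ) ?_
  ext x
  change Ideal.Quotient.mk I (L (algebraMap F F' x)) = φ (algebraMap F F' x)
  rw [hL]
  exact hl x

theorem exists_factor {B : Type*} [CommRing B] (I : Ideal B) [hB : HenselianRing B I] {n m k : ℕ}
    (hn : n = m + k) (p : MonicDegreeEq B n) (q1 : MonicDegreeEq (B ⧸ I) m)
    (q2 : MonicDegreeEq (B ⧸ I) k) (hq : q1.1 * q2.1 = p.1.map (algebraMap B (B ⧸ I)))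
    (hc : IsCoprime q1.1 q2.1) :
    ∃ (f1 : MonicDegreeEq B m) (f2 : MonicDegreeEq B k), f1.1 * f2.1 = p.1 ∧ IsCoprime f1.1 f2.1 ∧
      f1.1.map (Ideal.Quotient.mk I) = q1.1 ∧ f2.1.map (Ideal.Quotient.mk I) = q2.1 := by
  obtain ⟨l, hl⟩ := exists_section' (F := UniversalFactorizationRing m k hn p)
    (F' := UniversalCoprimeFactorizationRing m k hn p)
    (UniversalFactorizationRing.presentation m k hn p).jacobian I
    ((UniversalCoprimeFactorizationRing.homEquiv (B ⧸ I) m k hn p).symm ⟨(q1, q2), hq, hc⟩)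
  set z := UniversalCoprimeFactorizationRing.homEquiv B m k hn p l with hz
  refine ⟨z.1.1, z.1.2, ?_, z.2.2, ?_, ?_⟩
  · rw [z.2.1]; simp
  · have := UniversalCoprimeFactorizationRing.homEquiv_comp_fst B m k hn p l (Ideal.Quotient.mkₐ B I)
    rw [hl, Equiv.apply_symm_apply] at this
    exact (congrArg Subtype.val this).symm
  · have := UniversalCoprimeFactorizationRing.homEquiv_comp_snd B m k hn p l (Ideal.Quotient.mkₐ B I)
    rw [hl, Equiv.apply_symm_apply] at this
    exact (congrArg Subtype.val this).symm

theorem exists_etale_idem {P B : Type u} [CommRing P] [CommRing B] [Algebra P B] (I : Ideal B)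
    [hB : HenselianRing B I] {n : ℕ} (p : Matrix (Fin n) (Fin n) P)
    (hp : ∀ i j, algebraMap P B ((p * p - p) i j) ∈ I) :
    ∃ (P' : Type u) (_ : CommRing P') (_ : Algebra P P') (_ : Algebra.Etale P P')
      (l : P' →ₐ[P] B) (E : Matrix (Fin n) (Fin n) P'), E * E = E ∧
      ∀ i j, l (E i j) - algebraMap P B (p i j) ∈ I := by
  classical
  let χ := (p * p - p).charpoly
  let g := χ.comp (X * X - X)
  have hχ : χ.Monic := Matrix.charpoly_monic _
  have hg0 : aeval p g = 0 := by
    rw [aeval_comp]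
    have : aeval p (X * X - X : P[X]) = p * p - p := by simp
    rw [this]
    exact Matrix.aeval_self_charpoly _
  let c : P →+* B ⧸ I := (Ideal.Quotient.mk I).comp (algebraMap P B)
  have hpc : (p * p - p).map c = 0 := by
    ext i j
    exact Ideal.Quotient.eq_zero_iff_mem.2 (hp i j)
  have hgc : g.map c = X ^ n * (X - 1) ^ n := by
    have : χ.map c = X ^ n := by
      rw [← Matrix.charpoly_map, hpc, Matrix.charpoly_zero, Fintype.card_fin]
    rw [map_comp, this]
    simp
    rw [← mul_pow]; ring
  have hgd : g.coeff (n + n) = 1 ∧ ∀ i > n + n, g.coeff i = 0 := by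
    rcases subsingleton_or_nontrivial P with h | h
    · exact ⟨Subsingleton.elim _ _, fun _ _ => Subsingleton.elim _ _⟩
    have h1 : (X * X - X : P[X]).Monic := by monicity!
    have h2 : (X * X - X : P[X]).natDegree = 2 := by compute_degree!
    have h3 : χ.natDegree = n := by
      rw [Matrix.charpoly_natDegree_eq_dim, Fintype.card_fin]
    have h4 : g.natDegree = n + n := by
      rw [natDegree_comp_eq_of_mul_ne_zero, h2, h3, mul_two]
      rw [hχ.leadingCoeff, h1.leadingCoeff]; simp
    have h5 : g.Monic := hχ.comp h1 (by rw [h2]; norm_num)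
    refine ⟨?_, fun i hi => coeff_eq_zero_of_natDegree_lt (by rw [h4]; exact hi)⟩
    rw [← h4]; exact h5
  let G : MonicDegreeEq P (n + n) := ⟨g, hgd⟩
  have hX : (X ^ n : (B ⧸ I)[X]).coeff n = 1 ∧ ∀ i > n, (X ^ n : (B ⧸ I)[X]).coeff i = 0 := by
    refine ⟨by simp, fun i hi => ?_⟩
    rw [coeff_X_pow, if_neg (by omega)]
  have hX1 : ((X - 1) ^ n : (B ⧸ I)[X]).coeff n = 1 ∧
      ∀ i > n, ((X - 1) ^ n : (B ⧸ I)[X]).coeff i = 0 := by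
    rcases subsingleton_or_nontrivial (B ⧸ I) with h | h
    · exact ⟨Subsingleton.elim _ _, fun _ _ => Subsingleton.elim _ _⟩
    have h1 : ((X - 1) ^ n : (B ⧸ I)[X]).Monic := (monic_X_sub_C 1).pow n
    have h2 : ((X - 1) ^ n : (B ⧸ I)[X]).natDegree = n := by
      have := natDegree_X_sub_C (1 : B ⧸ I)
      rw [C_1] at this
      have hm : (X - 1 : (B ⧸ I)[X]).Monic := by simpa using monic_X_sub_C (1 : B ⧸ I)
      rw [hm.natDegree_pow, this, mul_one]
    refine ⟨?_, fun i hi => coeff_eq_zero_of_natDegree_lt (by rw [h2]; exact hi)⟩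
    have := h1.coeff_natDegree
    rwa [h2] at this
  have hcop : IsCoprime (X ^ n : (B ⧸ I)[X]) ((X - 1) ^ n) := by
    refine IsCoprime.pow ⟨1, -1, by ring⟩
  obtain ⟨F1, F2, hF, hFc, hF1, hF2⟩ := exists_factor I rfl (G.map (algebraMap P B)) ⟨X ^ n, hX⟩
    ⟨(X - 1) ^ n, hX1⟩ (by
      change X ^ n * (X - 1) ^ n = (g.map (algebraMap P B)).map (Ideal.Quotient.mk I)
      rw [map_map, ← hgc]) hcop
  let P' := UniversalCoprimeFactorizationRing n n rfl G
  let l : P' →ₐ[P] B := (UniversalCoprimeFactorizationRing.homEquiv B n n rfl G).symm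
    ⟨(F1, F2), hF, hFc⟩
  let z := UniversalCoprimeFactorizationRing.homEquiv P' n n rfl G (AlgHom.id P P')
  have hz1 : z.1.1.1.map (l : P' →+* B) = F1.1 := by
    have := UniversalCoprimeFactorizationRing.homEquiv_comp_fst P' n n rfl G (AlgHom.id P P') l
    rw [AlgHom.comp_id, Equiv.apply_symm_apply] at this
    exact (congrArg Subtype.val this).symm
  have hz2 : z.1.2.1.map (l : P' →+* B) = F2.1 := by
    have := UniversalCoprimeFactorizationRing.homEquiv_comp_snd P' n n rfl G (AlgHom.id P P') l
    rw [AlgHom.comp_id, Equiv.apply_symm_apply] at this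
    exact (congrArg Subtype.val this).symm
  have hzg : z.1.1.1 * z.1.2.1 = g.map (algebraMap P P') := z.2.1
  obtain ⟨u, v, huv⟩ := z.2.2
  generalize hf1 : z.1.1.1 = f1 at *
  generalize hf2 : z.1.2.1 = f2 at *
  let M : Matrix (Fin n) (Fin n) P' := p.map (algebraMap P P')
  have hM : aeval M (f1 * f2) = 0 := by
    rw [hzg, aeval_map_algebraMap]
    have := congrArg ((Algebra.ofId P P').mapMatrix (m := Fin n)) hg0
    rw [← aeval_algHom_apply, map_zero] at this
    exact this
  let E : Matrix (Fin n) (Fin n) P' := aeval M (u * f1)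
  have hE1 : E + aeval M (v * f2) = 1 := by
    rw [← map_add, huv, map_one]
  refine ⟨P', inferInstance, inferInstance, inferInstance, l, E, ?_, ?_⟩
  · have h1 : E * aeval M (v * f2) = 0 := by
      rw [← map_mul, show u * f1 * (v * f2) = u * v * (f1 * f2) by ring, map_mul, hM, mul_zero]
    have h2 := congrArg (fun T => E * T) hE1
    simp only [mul_add, h1, add_zero, mul_one] at h2
    exact h2
  · rcases Nat.eq_zero_or_pos n with hn | hn
    · subst hn; intro i; exact i.elim0
    let q : P' →+* B ⧸ I := (Ideal.Quotient.mk I).comp (l : P' →+* B)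
    have hq1 : f1.map q = X ^ n := by
      rw [← map_map, hz1, hF1]
    have hq2 : f2.map q = (X - 1) ^ n := by
      rw [← map_map, hz2, hF2]
    let N : Matrix (Fin n) (Fin n) (B ⧸ I) := p.map c
    have hMN : M.map q = N := by
      ext i j
      simp [M, N, q, c]
    have hev : ∀ r : P'[X], (aeval M r).map q = aeval N (r.map q) := by
      intro r
      rw [← hMN]
      have := Polynomial.map_aeval_eq_aeval_map (φ := q) (ψ := q.mapMatrix (m := Fin n)) (by
        ext x i j
        by_cases hij : i = j
        · subst hij; simp [Matrix.algebraMap_matrix_apply]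
        · simp [Matrix.algebraMap_matrix_apply, hij]) r M
      exact this
    have hNN : N * N = N := by
      have := hpc
      rw [Matrix.map_sub _ (map_sub c), Matrix.map_mul, sub_eq_zero] at this
      exact this
    have hNn : N ^ n = N := IsIdempotentElem.pow_eq hNN (by omega)
    have hEN : E.map q = N := by
      have hEq : E.map q = aeval N (u.map q) * N := by
        rw [hev, Polynomial.map_mul, hq1, map_mul, map_pow, aeval_X, hNn]
      have h1 : (1 - E.map q) * N = 0 := by
        have e1 : 1 - E.map q = aeval N (v.map q * f2.map q) := by
          rw [← Polynomial.map_mul, ← hev]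
          have := congrArg (fun T => T.map q) hE1
          simp only [Matrix.map_add _ (map_add q)] at this
          rw [sub_eq_iff_eq_add', this]
          simp
        rw [e1]
        have e2 : aeval N (f2.map q) * N = 0 := by
          have : aeval N (f2.map q * f1.map q) = 0 := by
            rw [← Polynomial.map_mul, mul_comm, ← hev, hM]; simp
          rw [map_mul, hq1, map_pow, aeval_X, hNn] at this
          exact this
        rw [map_mul, mul_assoc, e2, mul_zero]
      rw [sub_mul, one_mul, sub_eq_zero] at h1
      rw [h1]
      conv_lhs => rw [hEq]
      rw [hEq, mul_assoc, hNN]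
    intro i j
    have := congrFun (congrFun hEN i) j
    exact Ideal.Quotient.eq.1 this

end HS

namespace HS

open Polynomial

theorem exists_ext_der {A P Q : Type*} [CommRing A] [CommRing P] [CommRing Q] [Algebra A P]
    [Algebra A Q] [Algebra P Q] [IsScalarTower A P Q] [Algebra.FormallyEtale P Q]
    (d : Derivation A P P) :
    ∃ d' : Derivation A Q Q, ∀ x, d' (algebraMap P Q x) = algebraMap P Q (d x) := by
  let f : (Ω[P⁄A]) →ₗ[P] Q := (Algebra.linearMap P Q).comp d.liftKaehlerDifferential
  let F : (Ω[Q⁄A]) →ₗ[Q] Q := (f.liftBaseChange Q).comp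
    (KaehlerDifferential.tensorKaehlerEquivOfFormallyEtale A P Q).symm.toLinearMap
  refine ⟨F.compDer (KaehlerDifferential.D A Q), fun x => ?_⟩
  change f.liftBaseChange Q ((KaehlerDifferential.tensorKaehlerEquivOfFormallyEtale A P Q).symm
    (KaehlerDifferential.D A Q (algebraMap P Q x))) = _
  rw [KaehlerDifferential.tensorKaehlerEquivOfFormallyEtale_symm_D_algebraMap]
  simp [f]

theorem formallySmooth_quot {A Q : Type*} [CommRing A] [CommRing Q] [Algebra A Q]
    [Algebra.FormallySmooth A Q] {n : ℕ} (d : Fin n → Derivation A Q Q)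
    (E Wi M : Matrix (Fin n) (Fin n) Q) (gv : Fin n → Q) (hM : ∀ i j, M i j = d j (gv i))
    (hE : E * E = E) (hEg : E.mulVec gv = gv) (hW : (E * M * E + (1 - E)) * Wi = 1) :
    Algebra.FormallySmooth A (Q ⧸ Ideal.span (Set.range gv)) := by
  set J := Ideal.span (Set.range gv) with hJ
  let f : Q →ₐ[A] Q ⧸ J := Ideal.Quotient.mkₐ A J
  set κ := RingHom.ker f.toRingHom with hκ'
  have hκ : κ = J := Ideal.mk_ker
  have hg : ∀ i, gv i ∈ κ := fun i => by
    rw [hκ]; exact Ideal.subset_span ⟨i, rfl⟩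
  let s : Fin n → Q := Wi.mulVec gv
  have hs : ∀ i, s i ∈ κ := fun i => by
    change ∑ j, Wi i j * gv j ∈ κ
    exact sum_mem fun j _ => Ideal.mul_mem_left _ _ (hg j)
  have hWs : (E * M * E + (1 - E)).mulVec s = gv := by
    simp only [s]
    rw [Matrix.mulVec_mulVec, hW, Matrix.one_mulVec]
  have hEMs : (E * M).mulVec s = gv := by
    have h1 := congrArg (fun T => (1 - E).mulVec T) hWs
    simp only [Matrix.mulVec_mulVec] at h1
    have e1 : (1 - E) * (E * M * E + (1 - E)) = 1 - E := by
      have : (1 - E) * E = 0 := by rw [sub_mul, one_mul, hE, sub_self]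
      rw [mul_add, ← mul_assoc, ← mul_assoc, this, mul_sub, this]; simp
    rw [e1, Matrix.sub_mulVec, Matrix.sub_mulVec, hEg, Matrix.one_mulVec, Matrix.one_mulVec,
      sub_self, sub_eq_zero] at h1
    rw [Matrix.add_mulVec, Matrix.sub_mulVec, ← h1, Matrix.one_mulVec, sub_self, add_zero,
      ← Matrix.mulVec_mulVec, ← h1] at hWs
    exact hWs
  have hkey : ∀ i, gv i - ∑ j, s j * d j (gv i) ∈ κ ^ 2 := by
    intro i
    have h1 : ∀ j, d j (gv i) - (E * M) i j ∈ κ := by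
      intro j
      have h2 : gv i = ∑ k, E i k * gv k := (congrFun hEg i).symm
      have h3 : d j (gv i) = ∑ k, (E i k * d j (gv k) + gv k * d j (E i k)) := by
        conv_lhs => rw [h2]
        rw [map_sum]
        refine Finset.sum_congr rfl fun k _ => ?_
        rw [Derivation.leibniz]; simp
      rw [h3, Matrix.mul_apply, ← Finset.sum_sub_distrib]
      refine sum_mem fun k _ => ?_
      rw [hM, add_sub_cancel_left]
      exact Ideal.mul_mem_right _ _ (hg k)
    have h4 : gv i = ∑ j, (E * M) i j * s j := (congrFun hEMs i).symm
    have h5 : gv i - ∑ j, s j * d j (gv i) = - ∑ j, s j * (d j (gv i) - (E * M) i j) := by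
      conv_lhs => enter [1]; rw [h4]
      rw [← Finset.sum_sub_distrib, ← Finset.sum_neg_distrib]
      exact Finset.sum_congr rfl fun j _ => by ring
    rw [h5, pow_two]
    exact neg_mem (sum_mem fun j _ => Ideal.mul_mem_mul (hs j) (h1 j))
  let σ : Q →ₐ[A] Q ⧸ κ ^ 2 := AlgHom.ofLinearMap
    ((Ideal.Quotient.mkₐ A (κ ^ 2)).toLinearMap.comp
      (LinearMap.id - ∑ j, (LinearMap.mulLeft A (s j)).comp (d j : Q →ₗ[A] Q)))
    (by simp) (by
      intro a b
      simp only [LinearMap.comp_apply, AlgHom.toLinearMap_apply, LinearMap.sub_apply,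
        LinearMap.sum_apply, LinearMap.id_apply, LinearMap.mulLeft_apply]
      rw [← map_mul]
      refine Ideal.Quotient.eq.2 ?_
      have : a * b - ∑ j, s j * d j (a * b) - (a - ∑ j, s j * d j a) * (b - ∑ j, s j * d j b) =
          - ((∑ j, s j * d j a) * (∑ j, s j * d j b)) := by
        have : ∑ j, s j * d j (a * b) = a * (∑ j, s j * d j b) + b * ∑ j, s j * d j a := by
          rw [Finset.mul_sum, Finset.mul_sum, ← Finset.sum_add_distrib]
          refine Finset.sum_congr rfl fun j _ => ?_
          rw [Derivation.leibniz]; simp; ring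
        rw [this]; ring
      erw [this]
      rw [pow_two]
      exact neg_mem (Ideal.mul_mem_mul (sum_mem fun j _ => Ideal.mul_mem_right _ _ (hs j))
        (sum_mem fun j _ => Ideal.mul_mem_right _ _ (hs j))))
  have hσ : ∀ a, σ a = Ideal.Quotient.mk (κ ^ 2) (a - ∑ j, s j * d j a) := by
    intro a
    simp [σ]
  have hσJ : ∀ a ∈ J, σ a = 0 := by
    intro a ha
    have : J ≤ RingHom.ker σ := by
      rw [hJ, Ideal.span_le]
      rintro _ ⟨i, rfl⟩
      change σ (gv i) = 0
      rw [hσ]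
      exact Ideal.Quotient.eq_zero_iff_mem.2 (hkey i)
    exact this ha
  refine Algebra.FormallySmooth.of_split f (Ideal.Quotient.liftₐ J σ hσJ) ?_
  refine Ideal.Quotient.algHom_ext _ ?_
  ext a
  change f.kerSquareLift (σ a) = f a
  rw [hσ]
  change f (a - ∑ j, s j * d j a) = f a
  rw [map_sub, sub_eq_self]
  exact (sum_mem fun j _ => Ideal.mul_mem_right _ _ (hs j) : ∑ j, s j * d j a ∈ κ)

end HS

namespace HS

open Polynomial

theorem exists_R_aux {A P P' B : Type u} [CommRing A] [CommRing P] [CommRing P'] [CommRing B]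
    [Algebra A P] [Algebra A B] [Algebra P B] [IsScalarTower A P B] [Algebra P P'] [Algebra A P']
    [IsScalarTower A P P'] [Algebra.Etale P P'] [Algebra.FormallySmooth A P]
    [Algebra.FinitePresentation A P] (I : Ideal A)
    (hjac : I.map (algebraMap A B) ≤ Ideal.jacobson ⊥) (J0 : Ideal P) (hJ0 : J0.FG)
    (hJ0B : ∀ x ∈ J0, algebraMap P B x = 0)
    (hker : ∀ x, algebraMap P B x ∈ I.map (algebraMap A B) → x ∈ J0 ⊔ I.map (algebraMap A P))
    (hsurj : ∀ b, ∃ p, b - algebraMap P B p ∈ I.map (algebraMap A B)) {n : ℕ}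
    (d : Fin n → Derivation A P P) (h : Fin n → P) (hh : ∀ i, h i ∈ J0)
    (star : ∀ F ∈ J0, F - ∑ j, d j F * h j ∈ J0 ^ 2 ⊔ I.map (algebraMap A P))
    (l : P' →ₐ[P] B) (E : Matrix (Fin n) (Fin n) P') (hE : E * E = E)
    (hEp : ∀ i j, l (E i j) - algebraMap P B (d j (h i)) ∈ I.map (algebraMap A B)) :
    ∃ (R : Type u) (_ : CommRing R) (_ : Algebra A R) (_ : Algebra P R) (_ : IsScalarTower A P R)
      (τ : R →ₐ[P] B), Algebra.Smooth A R ∧ Algebra.FiniteType P R ∧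
        ∀ z, τ z ∈ I.map (algebraMap A B) → z ∈ I.map (algebraMap A R) := by
  classical
  set IB := I.map (algebraMap A B) with hIB
  set φ := algebraMap P P' with hφ
  let q : Ideal P' := IB.comap l
  have hlφ : ∀ x, l (φ x) = algebraMap P B x := l.commutes
  have hφq : ∀ x ∈ J0, φ x ∈ q := fun x hx => by
    change l (φ x) ∈ IB
    rw [hlφ, hJ0B x hx]; exact zero_mem _
  have hIq : I.map (algebraMap A P') ≤ q := by
    rw [Ideal.map_le_iff_le_comap]
    intro a ha
    change l (algebraMap A P' a) ∈ IB
    rw [IsScalarTower.algebraMap_apply A P P', l.commutes, ← IsScalarTower.algebraMap_apply]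
    exact Ideal.mem_map_of_mem _ ha
  have hEq : ∀ i j, E i j - φ (d j (h i)) ∈ q := fun i j => by
    change l (E i j - φ (d j (h i))) ∈ IB
    rw [map_sub, hlφ]; exact hEp i j
  let gv : Fin n → P' := E.mulVec (fun j => φ (h j))
  have hgv : ∀ i, gv i = ∑ j, E i j * φ (h j) := fun i => rfl
  let N := Ideal.span (Set.range gv) ⊔ I.map (algebraMap A P')
  have hgq : ∀ i, gv i ∈ q := fun i => by
    rw [hgv]; exact sum_mem fun j _ => Ideal.mul_mem_left _ _ (hφq _ (hh j))
  have hJ0q : J0.map φ ≤ q := by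
    rw [Ideal.map_le_iff_le_comap]; exact hφq
  have hIPφ : (I.map (algebraMap A P)).map φ = I.map (algebraMap A P') := by
    rw [Ideal.map_map, IsScalarTower.algebraMap_eq A P P']
  have hsq : ∀ F ∈ J0 ^ 2 ⊔ I.map (algebraMap A P), φ F ∈ q ^ 2 ⊔ N := by
    intro F hF
    have h1 := Ideal.mem_map_of_mem φ hF
    rw [Ideal.map_sup, Ideal.map_pow, hIPφ] at h1
    exact sup_le_sup (Ideal.pow_right_mono hJ0q 2) le_sup_right h1
  have hφh : ∀ i, φ (h i) ∈ q ^ 2 ⊔ N := by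
    intro i
    have h1 : φ (h i) = φ (h i - ∑ j, d j (h i) * h j) -
        ∑ j, (E i j - φ (d j (h i))) * φ (h j) + gv i := by
      rw [hgv, map_sub, map_sum]
      simp only [sub_mul, Finset.sum_sub_distrib, map_mul]
      ring
    rw [h1]
    refine add_mem (sub_mem (hsq _ (star _ (hh i))) (Ideal.mem_sup_left ?_))
      (Ideal.mem_sup_right (Ideal.mem_sup_left (Ideal.subset_span ⟨i, rfl⟩)))
    rw [pow_two]
    exact sum_mem fun j _ => Ideal.mul_mem_mul (hEq i j) (hφq _ (hh j))
  have hφF : J0.map φ ≤ q ^ 2 ⊔ N := by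
    rw [Ideal.map_le_iff_le_comap]
    intro F hF
    change φ F ∈ q ^ 2 ⊔ N
    have h1 : φ F = φ (F - ∑ j, d j F * h j) + ∑ j, φ (d j F) * φ (h j) := by
      rw [map_sub, map_sum]
      simp only [map_mul]
      ring
    rw [h1]
    exact add_mem (hsq _ (star _ hF)) (sum_mem fun j _ => Ideal.mul_mem_left _ _ (hφh j))
  have hcom : (q.comap φ).map φ ≤ J0.map φ ⊔ I.map (algebraMap A P') := by
    rw [← hIPφ, ← Ideal.map_sup]
    refine Ideal.map_mono fun x hx => hker x ?_
    rw [← hlφ]; exact hx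
  have hsur : ∀ x : P', ∃ p : P, x - algebraMap P P' p ∈ q := by
    intro x
    obtain ⟨p, hp⟩ := hsurj (l x)
    refine ⟨p, ?_⟩
    change l (x - φ p) ∈ IB
    rw [map_sub, hlφ]; exact hp
  have h2 : q ≤ q ^ 2 ⊔ N := by
    haveI : IsLocalization.Away (1 : P') P' := IsLocalization.away_of_isUnit_of_bijective P'
      isUnit_one Function.bijective_id
    refine (ker_le_sq (P := P) (Q' := P') (1 : P') q (by simp) hsur).trans
      (sup_le le_sup_left (hcom.trans (sup_le hφF ?_)))
    exact le_sup_right.trans (le_sup_right)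
  obtain ⟨q0, hq0, hq0q, hq01⟩ := exists_fg_le (P := P) q hsur
  obtain ⟨t, ht1, htN⟩ := exists_t (N := N) (Submodule.FG.sup hq0 (Ideal.FG.map hJ0 φ)) (sup_le hq0q hJ0q)
    (hq01.trans (sup_le (le_sup_left.trans le_sup_left) (hcom.trans
      (sup_le (le_sup_right.trans le_sup_left) (le_sup_right.trans le_sup_right))))) h2
  choose d' hd' using fun j => exists_ext_der (Q := P') (d j)
  let M : Matrix (Fin n) (Fin n) P' := Matrix.of fun i j => d' j (gv i)
  let W := E * M * E + (1 - E)
  have hWq : W.det - 1 ∈ q := by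
    let π := Ideal.Quotient.mk q
    have hM : M.map π = E.map π := by
      have : M.map π = E.map π * E.map π := by
        ext i j
        simp only [Matrix.map_apply, Matrix.mul_apply]
        rw [← sub_eq_zero]
        simp only [← map_mul]
        rw [← map_sum, ← map_sub, Ideal.Quotient.eq_zero_iff_mem]
        change d' j (gv i) - _ ∈ q
        rw [hgv, map_sum, ← Finset.sum_sub_distrib]
        refine sum_mem fun k _ => ?_
        rw [Derivation.leibniz, hd']
        have : E i k • φ (d j (h k)) + φ (h k) • d' j (E i k) - E i k * E k j =
          d' j (E i k) * φ (h k) - E i k * (E k j - φ (d j (h k))) := by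
            simp only [smul_eq_mul]; ring
        rw [this]
        exact sub_mem (Ideal.mul_mem_left _ _ (hφq _ (hh k))) (Ideal.mul_mem_left _ _ (hEq k j))
      rw [this, ← Matrix.map_mul, hE]
    have hEE : E.map π * E.map π = E.map π := by rw [← Matrix.map_mul, hE]
    have hW1 : W.map π = 1 := by
      have : W.map π = E.map π * M.map π * E.map π + (1 - E.map π) := by
        simp only [W]
        rw [Matrix.map_add _ (map_add π), Matrix.map_sub _ (map_sub π), Matrix.map_mul,
          Matrix.map_mul, Matrix.map_one _ (map_zero π) (map_one π)]
      rw [this, hM, hEE, hEE]; abel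
    rw [← Ideal.Quotient.eq, map_one]
    have := RingHom.map_det π W
    rw [this]
    change (W.map π).det = 1
    rw [hW1, Matrix.det_one]
  let Δ := t * W.det
  have hΔ1 : Δ - 1 ∈ q := by
    have : Δ - 1 = t * (W.det - 1) + (t - 1) := by simp only [Δ]; ring
    rw [this]
    exact add_mem (Ideal.mul_mem_left _ _ hWq) ht1
  have hΔN : ∀ x ∈ q, Δ * x ∈ N := fun x hx => by
    have : Δ * x = W.det * (t * x) := by simp only [Δ]; ring
    rw [this]; exact Ideal.mul_mem_left _ _ (htN x hx)
  have hlΔ : IsUnit (l Δ) := by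
    refine isUnit_of_sub_one_mem hjac ?_
    have : l (Δ - 1) ∈ IB := hΔ1
    rwa [map_sub, map_one] at this
  let Q := Localization.Away Δ
  haveI : IsScalarTower A P Q := by
    refine IsScalarTower.of_algebraMap_eq' ?_
    rw [IsScalarTower.algebraMap_eq A P' Q, IsScalarTower.algebraMap_eq P P' Q,
      IsScalarTower.algebraMap_eq A P P']
    rfl
  haveI : Algebra.FormallyEtale P' Q := Algebra.FormallyEtale.of_isLocalization (Submonoid.powers Δ)
  haveI : Algebra.FinitePresentation P' Q := IsLocalization.Away.finitePresentation Δ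
  haveI : Algebra.FormallySmooth A P' := Algebra.FormallySmooth.comp A P P'
  haveI : Algebra.FormallySmooth A Q := Algebra.FormallySmooth.comp A P' Q
  haveI : Algebra.FinitePresentation P Q := Algebra.FinitePresentation.trans P P' Q
  haveI : Algebra.FinitePresentation A Q := Algebra.FinitePresentation.trans A P Q
  choose d2 hd2 using fun j => exists_ext_der (Q := Q) (d' j)
  let ι := algebraMap P' Q
  let gv2 : Fin n → Q := fun i => ι (gv i)
  have hdetu : IsUnit (ι W.det) := by
    have : IsUnit (ι Δ) := IsLocalization.Away.algebraMap_isUnit Δ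
    rw [map_mul] at this
    exact isUnit_of_mul_isUnit_right this
  have hsmooth : Algebra.FormallySmooth A (Q ⧸ Ideal.span (Set.range gv2)) := by
    refine formallySmooth_quot d2 (E.map ι) (W.map ι)⁻¹ (M.map ι) gv2 ?_ ?_ ?_ ?_
    · intro i j
      exact (hd2 j (gv i)).symm
    · rw [← Matrix.map_mul, hE]
    · have : E.mulVec gv = gv := by
        simp only [gv]; rw [Matrix.mulVec_mulVec, hE]
      ext i
      have h3 := congrArg ι (congrFun this i)
      rw [RingHom.map_mulVec] at h3
      exact h3
    · have : E.map ι * M.map ι * E.map ι + (1 - E.map ι) = W.map ι := by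
        simp only [W]
        rw [Matrix.map_add _ (map_add ι), Matrix.map_sub _ (map_sub ι), Matrix.map_mul,
          Matrix.map_mul, Matrix.map_one _ (map_zero ι) (map_one ι)]
      rw [this]
      refine Matrix.mul_nonsing_inv _ ?_
      have h3 := RingHom.map_det ι W
      rw [h3] at hdetu
      exact hdetu
  have hfg : (Ideal.span (Set.range gv2)).FG := Submodule.fg_span (Set.finite_range _)
  have hfp : Algebra.FinitePresentation A (Q ⧸ Ideal.span (Set.range gv2)) :=
    Algebra.FinitePresentation.quotient hfg
  have hfp2 : Algebra.FinitePresentation P (Q ⧸ Ideal.span (Set.range gv2)) :=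
    Algebra.FinitePresentation.quotient hfg
  let L : Q →ₐ[P] B := IsLocalization.liftAlgHom (M := Submonoid.powers Δ) (f := l) (by
    rintro ⟨_, m, rfl⟩; simpa using hlΔ.pow m)
  have hL : ∀ x, L (ι x) = l x := fun x => by simp [L, ι]
  have hLg : ∀ a ∈ Ideal.span (Set.range gv2), L a = 0 := by
    intro a ha
    have : Ideal.span (Set.range gv2) ≤ RingHom.ker L := by
      rw [Ideal.span_le]
      rintro _ ⟨i, rfl⟩
      change L (ι (gv i)) = 0
      rw [hL, hgv, map_sum]
      refine Finset.sum_eq_zero fun j _ => ?_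
      rw [map_mul, hlφ, hJ0B _ (hh j), mul_zero]
    exact this ha
  refine ⟨Q ⧸ Ideal.span (Set.range gv2), inferInstance, inferInstance, inferInstance,
    inferInstance, Ideal.Quotient.liftₐ _ L hLg, ⟨hsmooth, hfp⟩, inferInstance, ?_⟩
  intro z hz
  obtain ⟨y, rfl⟩ := Ideal.Quotient.mk_surjective z
  have hy : L y ∈ IB := hz
  obtain ⟨⟨x, ⟨_, m, rfl⟩⟩, hmk⟩ := IsLocalization.surj (Submonoid.powers Δ) y
  have hxq : x ∈ q := by
    change l x ∈ IB
    rw [← hL]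
    change L (algebraMap P' Q x) ∈ IB
    rw [← hmk, map_mul]
    exact Ideal.mul_mem_right _ _ hy
  have h3 := Ideal.mem_map_of_mem ((Ideal.Quotient.mk (Ideal.span (Set.range gv2))).comp ι)
    (hΔN x hxq)
  have h4 : N.map ((Ideal.Quotient.mk (Ideal.span (Set.range gv2))).comp ι) ≤
      I.map (algebraMap A (Q ⧸ Ideal.span (Set.range gv2))) := by
    rw [Ideal.map_sup]
    refine sup_le ?_ ?_
    · rw [Ideal.map_le_iff_le_comap, Ideal.span_le]
      rintro _ ⟨i, rfl⟩
      change Ideal.Quotient.mk (Ideal.span (Set.range gv2)) (gv2 i) ∈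
        I.map (algebraMap A (Q ⧸ Ideal.span (Set.range gv2)))
      have e0 : gv2 i ∈ Ideal.span (Set.range gv2) := Ideal.subset_span ⟨i, rfl⟩
      rw [Ideal.Quotient.eq_zero_iff_mem.2 e0]
      exact zero_mem _
    · rw [Ideal.map_map]
      refine le_of_eq ?_
      congr 1
  have h5 := h4 h3
  have h6 : ((Ideal.Quotient.mk (Ideal.span (Set.range gv2))).comp ι) (Δ * x) =
      Ideal.Quotient.mk (Ideal.span (Set.range gv2)) (ι (Δ ^ (m + 1))) * Ideal.Quotient.mk _ y := by
    have e1 : ι x = y * ι (Δ ^ m) := hmk.symm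
    have e2 : ι (Δ * x) = ι (Δ ^ (m + 1)) * y := by
      rw [map_mul ι, e1, map_pow, map_pow]; ring
    rw [RingHom.comp_apply, e2, map_mul]
  rw [h6] at h5
  have h7 : IsUnit (Ideal.Quotient.mk (Ideal.span (Set.range gv2)) (ι (Δ ^ (m + 1)))) := by
    have : IsUnit (ι Δ) := IsLocalization.Away.algebraMap_isUnit Δ
    refine IsUnit.map _ ?_
    rw [map_pow]; exact this.pow _
  exact (Ideal.unit_mul_mem_iff_mem _ h7).1 h5

end HS

namespace HS

open Polynomial

theorem exists_R {A P B : Type u} [CommRing A] [CommRing P] [CommRing B]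
    [Algebra A P] [Algebra A B] [Algebra P B] [IsScalarTower A P B]
    [Algebra.FormallySmooth A P]
    [Algebra.FinitePresentation A P] (I : Ideal A)
    (hens : HenselianRing B (I.map (algebraMap A B))) (J0 : Ideal P) (hJ0 : J0.FG)
    (hJ0B : ∀ x ∈ J0, algebraMap P B x = 0)
    (hker : ∀ x, algebraMap P B x ∈ I.map (algebraMap A B) → x ∈ J0 ⊔ I.map (algebraMap A P))
    (hsurj : ∀ b, ∃ p, b - algebraMap P B p ∈ I.map (algebraMap A B)) {n : ℕ}
    (d : Fin n → Derivation A P P) (h : Fin n → P) (hh : ∀ i, h i ∈ J0)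
    (star : ∀ F ∈ J0, F - ∑ j, d j F * h j ∈ J0 ^ 2 ⊔ I.map (algebraMap A P)) :
    ∃ (R : Type u) (_ : CommRing R) (_ : Algebra A R) (_ : Algebra P R) (_ : IsScalarTower A P R)
      (τ : R →ₐ[P] B), Algebra.Smooth A R ∧ Algebra.FiniteType P R ∧
        ∀ z, τ z ∈ I.map (algebraMap A B) → z ∈ I.map (algebraMap A R) := by
  have hd0 : ∀ k, ∀ F ∈ J0 ^ 2 ⊔ I.map (algebraMap A P), d k F ∈ J0 ⊔ I.map (algebraMap A P) := by
    intro k F hF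
    obtain ⟨x, hx, y, hy, rfl⟩ := Submodule.mem_sup.1 hF
    rw [map_add]
    refine add_mem (Ideal.mem_sup_left ?_) (Ideal.mem_sup_right ?_)
    · rw [pow_two] at hx
      refine Submodule.mul_induction_on hx ?_ ?_
      · intro a ha b hb
        rw [Derivation.leibniz]
        exact add_mem (Ideal.mul_mem_right _ _ ha) (Ideal.mul_mem_right _ _ hb)
      · intro a b ha hb
        rw [map_add]; exact add_mem ha hb
    · refine Submodule.span_induction ?_ ?_ ?_ ?_ hy
      · rintro _ ⟨a, ha, rfl⟩
        rw [Derivation.map_algebraMap]; exact zero_mem _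
      · rw [map_zero]; exact zero_mem _
      · intro a b _ _ ha hb
        rw [map_add]; exact add_mem ha hb
      · intro a b hb1 hb
        rw [smul_eq_mul, Derivation.leibniz]
        exact add_mem (Ideal.mul_mem_left _ _ hb) (Ideal.mul_mem_right _ _ hb1)
  have hKB : ∀ x ∈ J0 ⊔ I.map (algebraMap A P), algebraMap P B x ∈ I.map (algebraMap A B) := by
    intro F hF
    obtain ⟨x, hx, y, hy, rfl⟩ := Submodule.mem_sup.1 hF
    rw [map_add, hJ0B x hx, zero_add, IsScalarTower.algebraMap_eq A P B, ← Ideal.map_map]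
    exact Ideal.mem_map_of_mem _ hy
  let p0 : Matrix (Fin n) (Fin n) P := Matrix.of fun i j => d j (h i)
  have hp0 : ∀ i j, algebraMap P B ((p0 * p0 - p0) i j) ∈ I.map (algebraMap A B) := by
    intro i k
    refine hKB _ ?_
    have h1 := hd0 k _ (star _ (hh i))
    have h2 : (p0 * p0 - p0) i k = - d k (h i - ∑ j, d j (h i) * h j) -
        ∑ j, d k (d j (h i)) * h j := by
      rw [map_sub, map_sum, Matrix.sub_apply, Matrix.mul_apply]
      simp only [Derivation.leibniz, smul_eq_mul, Finset.sum_add_distrib]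
      have : ∑ j, h j * d k (d j (h i)) = ∑ j, d k (d j (h i)) * h j :=
        Finset.sum_congr rfl fun j _ => mul_comm _ _
      rw [this]
      simp only [p0, Matrix.of_apply]
      ring
    rw [h2]
    exact sub_mem (neg_mem h1) (Ideal.mem_sup_left (sum_mem fun j _ => Ideal.mul_mem_left _ _ (hh j)))
  obtain ⟨P', _, _, _, l, E, hE, hEp⟩ := exists_etale_idem (I.map (algebraMap A B)) p0 hp0
  letI : Algebra A P' := ((algebraMap P P').comp (algebraMap A P)).toAlgebra
  haveI : IsScalarTower A P P' := IsScalarTower.of_algebraMap_eq' rfl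
  exact exists_R_aux I hens.jac J0 hJ0 hJ0B hker hsurj d h hh star l E hE hEp

theorem taylor {A : Type*} [CommRing A] {n : ℕ} (J0 : Ideal (MvPolynomial (Fin n) A))
    (h : Fin n → MvPolynomial (Fin n) A) (hh : ∀ i, h i ∈ J0) (F : MvPolynomial (Fin n) A) :
    MvPolynomial.aeval (fun i => MvPolynomial.X i - h i) F -
      (F - ∑ j, MvPolynomial.pderiv j F * h j) ∈ J0 ^ 2 := by
  induction F using MvPolynomial.induction_on with
  | C a => simp
  | add p q hp hq =>
    have := add_mem hp hq
    convert this using 1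
    simp only [map_add, add_mul, Finset.sum_add_distrib]
    ring
  | mul_X p i hp =>
    set D := ∑ j, MvPolynomial.pderiv j p * h j with hD
    have h1 : ∑ j, MvPolynomial.pderiv j (p * MvPolynomial.X i) * h j =
        D * MvPolynomial.X i + p * h i := by
      simp only [Derivation.leibniz, MvPolynomial.pderiv_X, smul_eq_mul, add_mul,
        Finset.sum_add_distrib]
      rw [hD, Finset.sum_mul, add_comm]
      congr 1
      · exact Finset.sum_congr rfl fun j _ => by ring
      · simp [Pi.single_apply]
    have h2 : D * h i ∈ J0 ^ 2 := by
      rw [pow_two]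
      exact Ideal.mul_mem_mul (sum_mem fun j _ => Ideal.mul_mem_left _ _ (hh j)) (hh i)
    have h3 := add_mem (Ideal.mul_mem_right (MvPolynomial.X i - h i) _ hp) h2
    convert h3 using 1
    rw [h1, map_mul, MvPolynomial.aeval_X]
    ring

theorem exists_star {A B : Type u} [CommRing A] [CommRing B] [Algebra A B] (I : Ideal A)
    (hfs : IsHFormallySmooth (algebraMap A B) I) {n : ℕ} (η : MvPolynomial (Fin n) A →ₐ[A] B)
    (J0 : Ideal (MvPolynomial (Fin n) A)) (hJ0B : ∀ x ∈ J0, η x = 0)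
    (hker : ∀ x, η x ∈ I.map (algebraMap A B) →
      x ∈ J0 ⊔ I.map (algebraMap A (MvPolynomial (Fin n) A)))
    (hsurj : ∀ b, ∃ p, b - η p ∈ I.map (algebraMap A B)) :
    ∃ h : Fin n → MvPolynomial (Fin n) A, (∀ i, h i ∈ J0) ∧
      ∀ F ∈ J0, F - ∑ j, MvPolynomial.pderiv j F * h j ∈
        J0 ^ 2 ⊔ I.map (algebraMap A (MvPolynomial (Fin n) A)) := by
  set IP := I.map (algebraMap A (MvPolynomial (Fin n) A)) with hIP
  set IB := I.map (algebraMap A B) with hIB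
  let T := J0 ^ 2 ⊔ IP
  have hIPB : ∀ x ∈ IP, η x ∈ IB := by
    intro x hx
    have := Ideal.mem_map_of_mem (η : MvPolynomial (Fin n) A →+* B) hx
    rwa [hIP, Ideal.map_map, AlgHom.comp_algebraMap] at this
  let f : MvPolynomial (Fin n) A →ₐ[A] B ⧸ IB := (Ideal.Quotient.mkₐ A IB).comp η
  have hfT : ∀ x ∈ T, f x = 0 := by
    intro x hx
    refine Ideal.Quotient.eq_zero_iff_mem.2 ?_
    change η x ∈ IB
    obtain ⟨y, hy, z, hz, rfl⟩ := Submodule.mem_sup.1 hx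
    rw [map_add, hJ0B y (Ideal.pow_le_self (by norm_num) hy), zero_add]
    exact hIPB z hz
  let p : (MvPolynomial (Fin n) A ⧸ T) →ₐ[A] B ⧸ IB := Ideal.Quotient.liftₐ T f hfT
  have hp : ∀ x, p (Ideal.Quotient.mk T x) = Ideal.Quotient.mk IB (η x) := fun x => rfl
  obtain ⟨v, hv1, hv2⟩ := hfs (MvPolynomial (Fin n) A ⧸ T) (B ⧸ IB) (algebraMap A _)
    (algebraMap A _) (p : (MvPolynomial (Fin n) A ⧸ T) →+* B ⧸ IB) (Ideal.Quotient.mk IB)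
    (AlgHom.comp_algebraMap p) rfl ⟨1, le_rfl, by
      constructor
      · rw [pow_one, eq_bot_iff, Ideal.map_le_iff_le_comap]
        intro a ha
        change Ideal.Quotient.mk T (algebraMap A _ a) = 0
        exact Ideal.Quotient.eq_zero_iff_mem.2
          (Ideal.mem_sup_right (Ideal.mem_map_of_mem _ ha))
      · rw [pow_one, eq_bot_iff, Ideal.map_le_iff_le_comap]
        intro a ha
        change Ideal.Quotient.mk IB (algebraMap A _ a) = 0
        exact Ideal.Quotient.eq_zero_iff_mem.2 (Ideal.mem_map_of_mem _ ha)⟩ (by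
      intro b
      obtain ⟨b, rfl⟩ := Ideal.Quotient.mk_surjective b
      obtain ⟨x, hx⟩ := hsurj b
      exact ⟨Ideal.Quotient.mk T x, (Ideal.Quotient.eq.2 hx).symm⟩) ⟨2, by norm_num, by
      rw [pow_two, eq_bot_iff, Ideal.mul_le]
      intro a ha b hb
      obtain ⟨x, rfl⟩ := Ideal.Quotient.mk_surjective a
      obtain ⟨y, rfl⟩ := Ideal.Quotient.mk_surjective b
      have hx := hker x (Ideal.Quotient.eq_zero_iff_mem.1 ha)
      have hy := hker y (Ideal.Quotient.eq_zero_iff_mem.1 hb)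
      change Ideal.Quotient.mk T x * Ideal.Quotient.mk T y = 0
      rw [← map_mul]
      refine Ideal.Quotient.eq_zero_iff_mem.2 ?_
      obtain ⟨x1, hx1, x2, hx2, rfl⟩ := Submodule.mem_sup.1 hx
      obtain ⟨y1, hy1, y2, hy2, rfl⟩ := Submodule.mem_sup.1 hy
      have : (x1 + x2) * (y1 + y2) = x1 * y1 + (x1 * y2 + x2 * (y1 + y2)) := by ring
      rw [this]
      refine add_mem (Ideal.mem_sup_left ?_) (Ideal.mem_sup_right ?_)
      · rw [pow_two]; exact Ideal.mul_mem_mul hx1 hy1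
      · exact add_mem (Ideal.mul_mem_left _ _ hy2) (Ideal.mul_mem_right _ _ hx2)⟩
  have hex : ∀ j, ∃ h ∈ J0, v (η (MvPolynomial.X j)) =
      Ideal.Quotient.mk T (MvPolynomial.X j - h) := by
    intro j
    obtain ⟨y, hy⟩ := Ideal.Quotient.mk_surjective (v (η (MvPolynomial.X j)))
    have h1 : (p : (MvPolynomial (Fin n) A ⧸ T) →+* B ⧸ IB) (v (η (MvPolynomial.X j))) =
      Ideal.Quotient.mk IB (η (MvPolynomial.X j)) := congrArg (fun g => g (η (MvPolynomial.X j))) hv2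
    rw [← hy] at h1
    have h2 : η (MvPolynomial.X j) - η y ∈ IB := Ideal.Quotient.eq.1 h1.symm
    rw [← map_sub] at h2
    obtain ⟨x1, hx1, x2, hx2, h3⟩ := Submodule.mem_sup.1 (hker _ h2)
    refine ⟨x1, hx1, ?_⟩
    rw [← hy]
    refine Ideal.Quotient.eq.2 ?_
    have : y - (MvPolynomial.X j - x1) = - x2 := by linear_combination h3
    rw [this]
    exact Ideal.mem_sup_right (neg_mem hx2)
  choose h hh hvh using hex
  refine ⟨h, hh, fun F hF => ?_⟩
  let v' : B →ₐ[A] (MvPolynomial (Fin n) A ⧸ T) :=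
    { v with commutes' := fun a => congrArg (fun g => g a) hv1 }
  have hvF : (v'.comp η) = (Ideal.Quotient.mkₐ A T).comp
      (MvPolynomial.aeval (fun i => MvPolynomial.X i - h i)) := by
    refine MvPolynomial.algHom_ext fun j => ?_
    have : v' (η (MvPolynomial.X j)) = Ideal.Quotient.mk T (MvPolynomial.X j - h j) := hvh j
    rw [AlgHom.comp_apply, this, AlgHom.comp_apply, MvPolynomial.aeval_X]
    rfl
  have h1 := congrArg (fun g => g F) hvF
  simp only [AlgHom.comp_apply, hJ0B F hF, map_zero] at h1
  have h2 : MvPolynomial.aeval (fun i => MvPolynomial.X i - h i) F ∈ T :=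
    Ideal.Quotient.eq_zero_iff_mem.1 h1.symm
  have h3 := sub_mem h2 (Ideal.mem_sup_left (T := IP) (taylor J0 h hh F))
  simpa using h3

end HS

namespace HS

open Polynomial

theorem inj_pow {A R B : Type u} [CommRing A] [CommRing R] [CommRing B] [Algebra A R] [Algebra A B]
    (I : Ideal A) (hfs : IsHFormallySmooth (algebraMap A B) I) (τ : R →ₐ[A] B) (r : ℕ) (hr : 1 ≤ r)
    (hsurj : ∀ b, ∃ x, b - τ x ∈ (I ^ r).map (algebraMap A B))
    (hinj : ∀ z, τ z ∈ I.map (algebraMap A B) → z ∈ I.map (algebraMap A R)) (z : R)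
    (hz : τ z ∈ (I ^ r).map (algebraMap A B)) : z ∈ (I ^ r).map (algebraMap A R) := by
  set IR := (I ^ r).map (algebraMap A R) with hIR
  set IB := (I ^ r).map (algebraMap A B) with hIB
  have hle : IB ≤ I.map (algebraMap A B) := Ideal.map_mono (Ideal.pow_le_self (by omega))
  let f : R →ₐ[A] B ⧸ IB := (Ideal.Quotient.mkₐ A IB).comp τ
  have hf : ∀ x ∈ IR, f x = 0 := by
    intro x hx
    refine Ideal.Quotient.eq_zero_iff_mem.2 ?_
    have := Ideal.mem_map_of_mem (τ : R →+* B) hx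
    rwa [hIR, Ideal.map_map, AlgHom.comp_algebraMap] at this
  let p : (R ⧸ IR) →ₐ[A] B ⧸ IB := Ideal.Quotient.liftₐ IR f hf
  have hkp : ∀ y, p y = 0 → y ∈ I.map (algebraMap A (R ⧸ IR)) := by
    intro y hy
    obtain ⟨x, rfl⟩ := Ideal.Quotient.mk_surjective y
    have h1 := hinj x (hle (Ideal.Quotient.eq_zero_iff_mem.1 hy))
    have h2 := Ideal.mem_map_of_mem (Ideal.Quotient.mk IR) h1
    rw [Ideal.map_map] at h2
    exact h2
  have hIE : (I ^ r).map (algebraMap A (R ⧸ IR)) = ⊥ := by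
    rw [eq_bot_iff, Ideal.map_le_iff_le_comap]
    intro a ha
    change Ideal.Quotient.mk IR (algebraMap A _ a) = 0
    exact Ideal.Quotient.eq_zero_iff_mem.2 (Ideal.mem_map_of_mem _ ha)
  obtain ⟨v, hv1, hv2⟩ := hfs (R ⧸ IR) (B ⧸ IB) (algebraMap A _)
    (algebraMap A _) (p : (R ⧸ IR) →+* B ⧸ IB) (Ideal.Quotient.mk IB)
    (AlgHom.comp_algebraMap p) rfl ⟨r, hr, by
      refine ⟨hIE, ?_⟩
      rw [eq_bot_iff, Ideal.map_le_iff_le_comap]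
      intro a ha
      change Ideal.Quotient.mk IB (algebraMap A _ a) = 0
      exact Ideal.Quotient.eq_zero_iff_mem.2 (Ideal.mem_map_of_mem _ ha)⟩ (by
      intro b
      obtain ⟨b, rfl⟩ := Ideal.Quotient.mk_surjective b
      obtain ⟨x, hx⟩ := hsurj b
      exact ⟨Ideal.Quotient.mk IR x, (Ideal.Quotient.eq.2 hx).symm⟩) ⟨r, hr, by
      rw [eq_bot_iff, ← hIE, Ideal.map_pow]
      exact Ideal.pow_right_mono (fun y hy => hkp y hy) r⟩
  have hpv : ∀ b, p (v b) = Ideal.Quotient.mk IB b := fun b => congrArg (fun g => g b) hv2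
  have hva : ∀ a, v (algebraMap A B a) = algebraMap A _ a := fun a => congrArg (fun g => g a) hv1
  have h1 : ∀ y, ∃ b, y - v b ∈ I.map (algebraMap A (R ⧸ IR)) := by
    intro y
    obtain ⟨x, rfl⟩ := Ideal.Quotient.mk_surjective y
    refine ⟨τ x, hkp _ ?_⟩
    rw [map_sub, hpv, sub_eq_zero]; rfl
  have h2 : ∀ k, ∀ y ∈ (I ^ k).map (algebraMap A (R ⧸ IR)),
      ∃ b, y - v b ∈ (I ^ (k + 1)).map (algebraMap A (R ⧸ IR)) := by
    intro k y hy
    refine Submodule.span_induction ?_ ?_ ?_ ?_ hy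
    · rintro _ ⟨a, ha, rfl⟩
      exact ⟨algebraMap A B a, by rw [hva, sub_self]; exact zero_mem _⟩
    · exact ⟨0, by simp⟩
    · rintro x y _ _ ⟨b, hb⟩ ⟨c, hc⟩
      refine ⟨b + c, ?_⟩
      rw [map_add, add_sub_add_comm]; exact add_mem hb hc
    · intro e x hx ⟨b, hb⟩
      obtain ⟨c, hc⟩ := h1 e
      refine ⟨c * b, ?_⟩
      have : e • x - v (c * b) = (e - v c) * x + v c * (x - v b) := by
        rw [map_mul, smul_eq_mul]; ring
      rw [this]
      refine add_mem ?_ (Ideal.mul_mem_left _ _ hb)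
      rw [pow_succ', Ideal.map_mul]
      exact Ideal.mul_mem_mul hc hx
  have h3 : ∀ k y, ∃ b, y - v b ∈ (I ^ k).map (algebraMap A (R ⧸ IR)) := by
    intro k
    induction k with
    | zero => intro y; exact ⟨0, by simp [Ideal.map_top]⟩
    | succ k ih =>
      intro y
      obtain ⟨b, hb⟩ := ih y
      obtain ⟨c, hc⟩ := h2 k _ hb
      exact ⟨b + c, by rwa [map_add, ← sub_sub]⟩
  obtain ⟨b, hb⟩ := h3 r (Ideal.Quotient.mk IR z)
  rw [hIE, Ideal.mem_bot, sub_eq_zero] at hb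
  have h4 : p (Ideal.Quotient.mk IR z) = 0 := Ideal.Quotient.eq_zero_iff_mem.2 hz
  rw [hb, hpv] at h4
  have h5 := Ideal.mem_map_of_mem v (Ideal.Quotient.eq_zero_iff_mem.1 h4)
  rw [hIB, Ideal.map_map, hv1, hIE, Ideal.mem_bot, ← hb] at h5
  exact Ideal.Quotient.eq_zero_iff_mem.1 h5

theorem finish {A P R0 B R : Type u} [CommRing A] [CommRing P] [CommRing R0] [CommRing B]
    [CommRing R] [Algebra A P] [Algebra A R0] [Algebra A R] [Algebra A B] [Algebra P R]
    [Algebra P B] [IsScalarTower A P R] [IsScalarTower A P B] (I : Ideal A)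
    (hfs : IsHFormallySmooth (algebraMap A B) I) (π : P →ₐ[A] R0) (hπ : Function.Surjective π)
    (hJ0 : (RingHom.ker π).FG) (ρ0 : R0 →+* B) (hρ0 : ρ0.comp (algebraMap A R0) = algebraMap A B)
    (hen0 : IsHenselization (I.map (algebraMap A R0)) ρ0)
    (hη : ∀ x, ρ0 (π x) = algebraMap P B x) [Algebra.FiniteType P R] (τ : R →ₐ[P] B)
    (hinj : ∀ z, τ z ∈ I.map (algebraMap A B) → z ∈ I.map (algebraMap A R)) :
    ∃ (H : Type u) (_ : CommRing H) (ρ : R →+* H),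
      IsHenselization (I.map (algebraMap A R)) ρ ∧
      ∃ J : Ideal H, J.FG ∧
        (∀ r : ℕ, 1 ≤ r → J ≤ (I ^ r).map (ρ.comp (algebraMap A R))) ∧
        ∃ e : (H ⧸ J) ≃+* B,
          (e : (H ⧸ J) →+* B).comp
            ((Ideal.Quotient.mk J).comp (ρ.comp (algebraMap A R))) = algebraMap A B := by
  have hIB0 : ∀ r, ((I.map (algebraMap A R0)) ^ r).map ρ0 = (I ^ r).map (algebraMap A B) := by
    intro r
    rw [← Ideal.map_pow, Ideal.map_map, hρ0]
  have hsurj : ∀ r b, ∃ p : P, b - algebraMap P B p ∈ (I ^ r).map (algebraMap A B) := by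
    intro r b
    obtain ⟨x, hx⟩ := (henselization_comparison hen0 r).2 b
    obtain ⟨p, rfl⟩ := hπ x
    refine ⟨p, ?_⟩
    rwa [hIB0, hη] at hx
  have hτP : ∀ p, τ (algebraMap P R p) = algebraMap P B p := τ.commutes
  have hτA : (τ : R →+* B).comp (algebraMap A R) = algebraMap A B := by
    rw [IsScalarTower.algebraMap_eq A P R, IsScalarTower.algebraMap_eq A P B, ← RingHom.comp_assoc,
      AlgHom.comp_algebraMap]
  have hensB : HenselianRing B (I.map (algebraMap A B)) := by
    have := hen0.1
    rwa [Ideal.map_map, hρ0] at this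
  have hsurjR : ∀ x : R, ∃ p : P, x - algebraMap P R p ∈
      (I.map (algebraMap A P)).map (algebraMap P R) := by
    intro x
    obtain ⟨p, hp⟩ := hsurj 1 (τ x)
    refine ⟨p, ?_⟩
    rw [Ideal.map_map, ← IsScalarTower.algebraMap_eq]
    refine hinj _ ?_
    rw [map_sub, hτP]
    rwa [pow_one] at hp
  obtain ⟨H, _, ρ, hH⟩ := exists_henselization R (I.map (algebraMap A R))
  obtain ⟨β, hβ, -⟩ := hH.2 B (I.map (algebraMap A B)) hensB (τ : R →+* B) (by
    rw [Ideal.map_map, hτA])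
  have hβρ : ∀ x, β (ρ x) = τ x := fun x => congrArg (fun g => g x) hβ
  have hIH : (I.map (algebraMap A R)).map ρ = I.map (ρ.comp (algebraMap A R)) := Ideal.map_map _ _
  have hβs : Function.Surjective β := by
    let S := β.range
    have hS : HenselianRing S (((I.map (algebraMap A R)).map ρ).map β.rangeRestrict) :=
      hens_surj hH.1 _ β.rangeRestrict_surjective
    let f0 : R0 →+* S := ρ0.codRestrict S (by
      intro x
      obtain ⟨p, rfl⟩ := hπ x
      exact ⟨ρ (algebraMap P R p), by rw [hβρ, hτP, hη]⟩)
    have hA : f0.comp (algebraMap A R0) = β.rangeRestrict.comp (ρ.comp (algebraMap A R)) := by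
      ext a
      change ρ0 (algebraMap A R0 a) = β (ρ (algebraMap A R a))
      rw [hβρ]
      have h1 : ρ0 (algebraMap A R0 a) = algebraMap A B a := congrArg (fun g => g a) hρ0
      have h2 : τ (algebraMap A R a) = algebraMap A B a := congrArg (fun g => g a) hτA
      rw [h1, h2]
    obtain ⟨g, hg, -⟩ := hen0.2 S _ hS f0 (by
      rw [Ideal.map_map, hA, hIH, Ideal.map_map])
    have h1 : (S.subtype.comp g) = RingHom.id B := by
      refine (hen0.2 B (I.map (algebraMap A B)) hensB ρ0 (by rw [Ideal.map_map, hρ0])).unique ?_ ?_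
      · rw [RingHom.comp_assoc, hg]; rfl
      · rfl
    intro b
    obtain ⟨x, hx⟩ := (g b).2
    exact ⟨x, hx.trans (congrArg (fun g => g b) h1)⟩
  let J : Ideal H := (RingHom.ker π).map (ρ.comp (algebraMap P R))
  have hJβ : J ≤ RingHom.ker β := by
    rw [Ideal.map_le_iff_le_comap]
    intro x hx
    change β (ρ (algebraMap P R x)) = 0
    rw [hβρ, hτP, ← hη, (show π x = 0 from hx), map_zero]
  have hβJ : RingHom.ker β ≤ J := by
    let μ := Ideal.Quotient.mk J
    have hC : HenselianRing (H ⧸ J) (((I.map (algebraMap A R)).map ρ).map μ) :=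
      hens_surj hH.1 _ Ideal.Quotient.mk_surjective
    let F : P →+* H ⧸ J := μ.comp (ρ.comp (algebraMap P R))
    have hF : RingHom.ker (π : P →+* R0) ≤ RingHom.ker F := by
      intro x hx
      exact Ideal.Quotient.eq_zero_iff_mem.2 (Ideal.mem_map_of_mem _ hx)
    let g0 : R0 →+* H ⧸ J := RingHom.liftOfSurjective (π : P →+* R0) hπ ⟨F, hF⟩
    have hg0 : ∀ p, g0 (π p) = F p := fun p => RingHom.liftOfRightInverse_comp_apply _ _ _ _ p
    have hIC : I.map (F.comp (algebraMap A P)) = ((I.map (algebraMap A R)).map ρ).map μ := by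
      rw [Ideal.map_map, Ideal.map_map]
      congr 1
      simp only [F]
      rw [IsScalarTower.algebraMap_eq A P R]
      rfl
    obtain ⟨g, hg, -⟩ := hen0.2 _ _ hC g0 (by
      rw [← hIC, Ideal.map_map]
      refine le_of_eq ?_
      congr 1
      ext a
      change g0 (algebraMap A R0 a) = F (algebraMap A P a)
      rw [← hg0, AlgHom.commutes])
    have h1 : μ.comp ρ = g.comp (τ : R →+* B) := by
      refine eq_of_agree (I.map (algebraMap A P)) hsurjR _ _ ?_ ?_
      · ext p
        change F p = g (τ (algebraMap P R p))
        rw [hτP, ← hη, ← hg0]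
        exact (congrArg (fun g => g (π p)) hg).symm
      · rw [Ideal.map_map]
        refine le_trans (le_of_eq ?_) hC.jac
        rw [← hIC]; rfl
    have h2 : g.comp β = μ := by
      refine (hH.2 _ _ hC (μ.comp ρ) (by rw [← Ideal.map_map ρ μ])).unique ?_ rfl
      rw [RingHom.comp_assoc, hβ, h1]
    intro z hz
    refine Ideal.Quotient.eq_zero_iff_mem.1 ?_
    have h3 : g (β z) = μ z := congrArg (fun g => g z) h2
    rw [(show β z = 0 from hz), map_zero] at h3
    exact h3.symm
  have hker : RingHom.ker β = J := le_antisymm hβJ hJβ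
  have hβA : β.comp (ρ.comp (algebraMap A R)) = algebraMap A B := by
    rw [← RingHom.comp_assoc, hβ, hτA]
  refine ⟨H, inferInstance, ρ, hH, RingHom.ker β, ?_, ?_, RingHom.quotientKerEquivOfSurjective hβs,
    ?_⟩
  · rw [hker]; exact Ideal.FG.map hJ0 _
  · intro r hr z hz
    have hK : ((I.map (algebraMap A R)) ^ r).map ρ = (I ^ r).map (ρ.comp (algebraMap A R)) := by
      rw [← Ideal.map_pow, Ideal.map_map]
    obtain ⟨x, hx⟩ := (henselization_comparison hH r).2 z
    rw [hK] at hx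
    have h1 := Ideal.mem_map_of_mem β hx
    rw [Ideal.map_map, hβA, map_sub, hβρ, (show β z = 0 from hz), zero_sub, neg_mem_iff] at h1
    let τ' : R →ₐ[A] B := { (τ : R →+* B) with commutes' := fun a => congrArg (fun g => g a) hτA }
    have h2 := inj_pow I hfs τ' r hr (fun b => by
      obtain ⟨p, hp⟩ := hsurj r b
      refine ⟨algebraMap P R p, ?_⟩
      change b - τ (algebraMap P R p) ∈ _
      rwa [hτP]) hinj x h1
    have h3 := Ideal.mem_map_of_mem ρ h2
    rw [Ideal.map_map] at h3
    have := add_mem hx h3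
    simpa using this
  · rw [← hβA]; rfl

end HS

/-- Structure of h-formally smooth hfp algebras: such a `B` is the quotient of the
Henselization `H` of a smooth `A`-algebra `R` by a finitely generated ideal `J` contained in
`⋂_{r ≥ 1} I^r·H`. -/
theorem exists_smooth_henselization_quotient_of_isHFormallySmooth
    {A B : Type u} [CommRing A] [CommRing B] [Algebra A B]
    (I : Ideal A) [HenselianRing A I]
    (hhfp : IsHfp (algebraMap A B) I)
    (hfs : IsHFormallySmooth (algebraMap A B) I) :
    ∃ (R : Type u) (_ : CommRing R) (_ : Algebra A R) (H : Type u) (_ : CommRing H)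
      (ρ : R →+* H),
      Algebra.Smooth A R ∧
      IsHenselization (I.map (algebraMap A R)) ρ ∧
      ∃ J : Ideal H, J.FG ∧
        (∀ r : ℕ, 1 ≤ r → J ≤ (I ^ r).map (ρ.comp (algebraMap A R))) ∧
        ∃ e : (H ⧸ J) ≃+* B,
          (e : (H ⧸ J) →+* B).comp
            ((Ideal.Quotient.mk J).comp (ρ.comp (algebraMap A R))) = algebraMap A B := by
  obtain ⟨R0, _, ψ, ρ0, hfp, hρ0, hen0⟩ := hhfp
  letI : Algebra A R0 := ψ.toAlgebra
  obtain ⟨n, π, hπ, hJ0⟩ := Algebra.FinitePresentation.out (R := A) (A := R0) (self := hfp)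
  let ρ' : R0 →ₐ[A] B := { ρ0 with commutes' := fun a => congrArg (fun g => g a) hρ0 }
  let η : MvPolynomial (Fin n) A →ₐ[A] B := ρ'.comp π
  letI : Algebra (MvPolynomial (Fin n) A) B := (η : MvPolynomial (Fin n) A →+* B).toAlgebra
  haveI : IsScalarTower A (MvPolynomial (Fin n) A) B :=
    IsScalarTower.of_algebraMap_eq' (AlgHom.comp_algebraMap η).symm
  have hη : ∀ x, ρ0 (π x) = algebraMap (MvPolynomial (Fin n) A) B x := fun x => rfl
  have hIB : (I.map ψ).map ρ0 = I.map (algebraMap A B) := by rw [Ideal.map_map, hρ0]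
  have hensB : HenselianRing B (I.map (algebraMap A B)) := by
    rw [← hIB]; exact hen0.1
  have hcmp := HS.henselization_comparison hen0 1
  simp only [pow_one, hIB] at hcmp
  have hJ0B : ∀ x ∈ RingHom.ker π, η x = 0 := by
    intro x hx
    change ρ0 (π x) = 0
    rw [(show π x = 0 from hx), map_zero]
  have hker : ∀ x, η x ∈ I.map (algebraMap A B) →
      x ∈ RingHom.ker π ⊔ I.map (algebraMap A (MvPolynomial (Fin n) A)) := by
    intro x hx
    have h1 : π x ∈ I.map ψ := hcmp.1 (π x) hx
    have h2 : I.map ψ = (I.map (algebraMap A (MvPolynomial (Fin n) A))).map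
        (π : MvPolynomial (Fin n) A →+* R0) := by
      rw [Ideal.map_map, AlgHom.comp_algebraMap]; rfl
    rw [h2] at h1
    obtain ⟨y, hy, hyx⟩ := (Ideal.mem_map_iff_of_surjective
      (π : MvPolynomial (Fin n) A →+* R0) hπ).1 h1
    have h3 : x - y ∈ RingHom.ker π := by
      change π (x - y) = 0
      rw [map_sub, sub_eq_zero]; exact hyx.symm
    have := add_mem (Ideal.mem_sup_left
      (T := I.map (algebraMap A (MvPolynomial (Fin n) A))) h3) (Ideal.mem_sup_right hy)
    simpa using this
  have hsurj : ∀ b, ∃ p, b - η p ∈ I.map (algebraMap A B) := by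
    intro b
    obtain ⟨x, hx⟩ := hcmp.2 b
    obtain ⟨p, rfl⟩ := hπ x
    exact ⟨p, hx⟩
  obtain ⟨h, hh, star⟩ := HS.exists_star I hfs η (RingHom.ker π) hJ0B hker hsurj
  obtain ⟨R, _, _, _, _, τ, hsm, hft, hinj⟩ := HS.exists_R I hensB (RingHom.ker π) hJ0 hJ0B hker
    hsurj (fun j => MvPolynomial.pderiv j) h hh star
  obtain ⟨H, hHr, ρ, hH, hrest⟩ := HS.finish I hfs π hπ hJ0 ρ0 hρ0 hen0 hη τ hinj
  exact ⟨R, _, _, H, hHr, ρ, hsm, hH, hrest⟩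
end

section
/- Let (A, I) be a Henselian pair and let B be an A-algebra such that (B, I·B) is a Henselian pair. Then the following are equivalent: (i) B is hfp over A with respect to I, the map A → B is h-formally étale, and B is flat as an A-module; (ii) B is h-étale over A, i.e. there exist an étale A-algebra R and an A-algebra homomorphism R → B exhibiting B as a Henselization of the pair (R, I·R). -/
universe u

section Part1
open TensorProduct

def HNbhd {R : Type u} [CommRing R] (K : Ideal R) (S : Type u) [CommRing S] [Algebra R S] : Prop :=
  Algebra.Etale R S ∧ ∀ (C : Type u) [CommRing C] [Algebra R C] (J : Ideal C),
    HenselianRing C J → K.map (algebraMap R C) ≤ J →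
      Nonempty (S →ₐ[R] C) ∧ Subsingleton (S →ₐ[R] C)

namespace HNbhd

variable {R : Type u} [CommRing R] {K : Ideal R}

lemma of_equiv {S T : Type u} [CommRing S] [Algebra R S] [CommRing T] [Algebra R T]
    (h : HNbhd K S) (e : S ≃ₐ[R] T) : HNbhd K T := by
  obtain ⟨h1, h2⟩ := h
  refine ⟨.of_equiv e, fun C _ _ J hJ hK ↦ ⟨?_, ⟨fun f g ↦ ?_⟩⟩⟩
  · obtain ⟨f⟩ := (h2 C J hJ hK).1
    exact ⟨f.comp e.symm.toAlgHom⟩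
  · have := (h2 C J hJ hK).2
    have h := Subsingleton.elim (f.comp e.toAlgHom) (g.comp e.toAlgHom)
    ext x
    obtain ⟨y, rfl⟩ := e.surjective x
    exact congr($h y)

lemma self : HNbhd K R :=
  ⟨inferInstance, fun C _ _ _ _ _ ↦ ⟨⟨Algebra.ofId R C⟩, inferInstance⟩⟩

lemma trans {S T : Type u} [CommRing S] [Algebra R S] [CommRing T] [Algebra R T] [Algebra S T]
    [IsScalarTower R S T] (h : HNbhd K S) (h' : HNbhd (K.map (algebraMap R S)) T) :
    HNbhd K T := by
  obtain ⟨h1, h2⟩ := h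
  obtain ⟨h1', h2'⟩ := h'
  refine ⟨.comp R S T, fun C _ _ J hJ hK ↦ ⟨?_, ⟨fun f g ↦ ?_⟩⟩⟩
  · obtain ⟨f⟩ := (h2 C J hJ hK).1
    algebraize [f.toRingHom]
    have : IsScalarTower R S C := .of_algebraMap_eq' f.comp_algebraMap.symm
    obtain ⟨g⟩ := (h2' C J hJ (by rwa [Ideal.map_map, ← IsScalarTower.algebraMap_eq])).1
    exact ⟨g.restrictScalars R⟩
  · have := (h2 C J hJ hK).2
    have h := Subsingleton.elim (f.comp (IsScalarTower.toAlgHom R S T))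
      (g.comp (IsScalarTower.toAlgHom R S T))
    let f₀ := (f.comp (IsScalarTower.toAlgHom R S T))
    algebraize [f₀.toRingHom]
    have : IsScalarTower R S C := .of_algebraMap_eq' f₀.comp_algebraMap.symm
    have := (h2' C J hJ (by rwa [Ideal.map_map, ← IsScalarTower.algebraMap_eq])).2
    let f1 : T →ₐ[S] C := { f with commutes' := fun s ↦ rfl }
    let g1 : T →ₐ[S] C := { g with commutes' := fun s ↦ congr($h.symm s) }
    have h3 : f1 = g1 := Subsingleton.elim _ _
    ext x
    exact congr($h3 x)

lemma tensor {S T : Type u} [CommRing S] [Algebra R S] [CommRing T] [Algebra R T]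
    (h : HNbhd K S) (h' : HNbhd K T) : HNbhd K (S ⊗[R] T) := by
  obtain ⟨h1, h2⟩ := h
  obtain ⟨h1', h2'⟩ := h'
  refine ⟨.comp R S _, fun C _ _ J hJ hK ↦ ⟨?_, ⟨fun f g ↦ ?_⟩⟩⟩
  · obtain ⟨f⟩ := (h2 C J hJ hK).1
    obtain ⟨g⟩ := (h2' C J hJ hK).1
    exact ⟨Algebra.TensorProduct.productMap f g⟩
  · have := (h2 C J hJ hK).2
    have := (h2' C J hJ hK).2
    exact Algebra.TensorProduct.ext' fun a b ↦ by
      have h3 := Subsingleton.elim (f.comp Algebra.TensorProduct.includeLeft)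
        (g.comp Algebra.TensorProduct.includeLeft)
      have h4 := Subsingleton.elim (f.comp Algebra.TensorProduct.includeRight)
        (g.comp Algebra.TensorProduct.includeRight)
      have h5 : f (a ⊗ₜ 1) = g (a ⊗ₜ 1) := congr($h3 a)
      have h6 : f (1 ⊗ₜ b) = g (1 ⊗ₜ b) := congr($h4 b)
      have : a ⊗ₜ[R] b = (a ⊗ₜ 1) * (1 ⊗ₜ b) := by simp
      rw [this, map_mul, map_mul, h5, h6]

/-- coequalizers -/
lemma exists_coeq {S T : Type u} [CommRing S] [Algebra R S] [CommRing T] [Algebra R T]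
    (h : HNbhd K S) (h' : HNbhd K T) (f g : S →ₐ[R] T) :
    ∃ (U : Type u) (_ : CommRing U) (_ : Algebra R U) (φ : T →ₐ[R] U),
      HNbhd K U ∧ φ.comp f = φ.comp g := by
  obtain ⟨h1, h2⟩ := h
  obtain ⟨h1', h2'⟩ := h'
  let P := S ⊗[R] S
  let p : P →ₐ[R] T := Algebra.TensorProduct.productMap f g
  let d : P →ₐ[R] S := Algebra.TensorProduct.productMap (AlgHom.id R S) (AlgHom.id R S)
  algebraize [p.toRingHom, d.toRingHom]
  have : IsScalarTower R P T := .of_algebraMap_eq' p.comp_algebraMap.symm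
  have : IsScalarTower R P S := .of_algebraMap_eq' d.comp_algebraMap.symm
  have : Algebra.Etale R P := .comp R S _
  have : Algebra.Etale P S := .of_restrictScalars R P S
  let U := T ⊗[P] S
  have hp : ∀ x : P, p x ⊗ₜ[P] (1 : S) = 1 ⊗ₜ[P] d x := fun x ↦ by
    have : p x ⊗ₜ[P] (1 : S) = (x • (1 : T)) ⊗ₜ[P] 1 := by
      rw [Algebra.smul_def, mul_one]; rfl
    rw [this, TensorProduct.smul_tmul, Algebra.smul_def, mul_one]; rfl
  refine ⟨U, inferInstance, inferInstance, (Algebra.TensorProduct.includeLeft : T →ₐ[R] T ⊗[P] S),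
    ⟨.comp R T _, fun C _ _ J hJ hK ↦ ⟨?_, ⟨fun a b ↦ ?_⟩⟩⟩, ?_⟩
  · obtain ⟨a⟩ := (h2' C J hJ hK).1
    have := (h2 C J hJ hK).2
    have hfg : a.comp f = a.comp g := Subsingleton.elim _ _
    let ap := a.comp p
    algebraize [ap.toRingHom]
    have : IsScalarTower R P C := .of_algebraMap_eq' ap.comp_algebraMap.symm
    have : (a.comp f).comp d = ap := Algebra.TensorProduct.ext' fun x y ↦ by
      have : a (f y) = a (g y) := congr($hfg y)
      simp [ap, d, p, this]
    let a1 : T →ₐ[P] C := { a with commutes' := fun s ↦ rfl }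
    let a2 : S →ₐ[P] C := { (a.comp f) with commutes' := fun s ↦ congr($this s) }
    exact ⟨(Algebra.TensorProduct.productMap a1 a2).restrictScalars R⟩
  · have := (h2 C J hJ hK).2
    have := (h2' C J hJ hK).2
    have h3 := Subsingleton.elim (a.comp (Algebra.TensorProduct.includeLeft : T →ₐ[R] T ⊗[P] S))
        (b.comp (Algebra.TensorProduct.includeLeft : T →ₐ[R] T ⊗[P] S))
    have h4 := Subsingleton.elim
        (a.comp ((Algebra.TensorProduct.includeRight : S →ₐ[P] T ⊗[P] S).restrictScalars R))
        (b.comp ((Algebra.TensorProduct.includeRight : S →ₐ[P] T ⊗[P] S).restrictScalars R))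
    ext x
    induction x using TensorProduct.induction_on with
    | zero => simp only [map_zero]
    | add x y hx hy => simp only [map_add, hx, hy]
    | tmul x y =>
      have h5 : a (x ⊗ₜ 1) = b (x ⊗ₜ 1) := congr($h3 x)
      have h6 : a (1 ⊗ₜ y) = b (1 ⊗ₜ y) := congr($h4 y)
      have : x ⊗ₜ[P] y = (x ⊗ₜ 1) * (1 ⊗ₜ y) := by simp
      rw [this, map_mul, map_mul, h5, h6]
  · ext x
    have h1 := hp (x ⊗ₜ 1)
    have h2 := hp (1 ⊗ₜ x)
    have e1 : p (x ⊗ₜ 1) = f x :=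
      (Algebra.TensorProduct.productMap_apply_tmul f g x 1).trans (by simp)
    have e2 : p (1 ⊗ₜ x) = g x :=
      (Algebra.TensorProduct.productMap_apply_tmul f g 1 x).trans (by simp)
    have e3 : d (x ⊗ₜ 1) = x :=
      (Algebra.TensorProduct.productMap_apply_tmul (AlgHom.id R S) (AlgHom.id R S) x 1).trans (by simp)
    have e4 : d (1 ⊗ₜ x) = x :=
      (Algebra.TensorProduct.productMap_apply_tmul (AlgHom.id R S) (AlgHom.id R S) 1 x).trans (by simp)
    rw [e1, e3] at h1
    rw [e2, e4] at h2
    exact h1.trans h2.symm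

end HNbhd

lemma henselianRing_of_nilpotent {C : Type u} [CommRing C] (J : Ideal C) (n : ℕ) (h : J ^ n = ⊥) :
    HenselianRing C J := by
  have : IsAdicComplete J C := by
    have h1 : ∀ m, n ≤ m → J ^ m = ⊥ := fun m hm ↦ by
      rw [eq_bot_iff, ← h]; exact Ideal.pow_le_pow_right hm
    refine { haus' := fun x hx ↦ ?_, prec' := fun f hf ↦ ⟨f n, fun m ↦ ?_⟩ }
    · have := hx n
      rw [h] at this
      rw [SModEq.sub_mem] at this
      simpa using this
    · rcases le_total m n with hm | hm
      · exact hf hm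
      · have := hf hm
        rw [h] at this
        have h2 : f n = f m := by
          rw [SModEq.sub_mem] at this
          simpa [sub_eq_zero] using this
        rw [h2]
  infer_instance
end Part1

section Part2
open CategoryTheory CategoryTheory.Limits

structure HNI {R : Type u} [CommRing R] (K : Ideal R) : Type u where
  n : ℕ
  p : Ideal (MvPolynomial (Fin n) R)
  prop : HNbhd K (MvPolynomial (Fin n) R ⧸ p)

namespace HNI

variable {R : Type u} [CommRing R] {K : Ideal R}

abbrev Q (i : HNI K) : Type u := MvPolynomial (Fin i.n) R ⧸ i.p

structure Mor (i j : HNI K) : Type u where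
  hom : i.Q →ₐ[R] j.Q

noncomputable instance : SmallCategory.{u} (HNI K) where
  Hom i j := Mor i j
  id i := ⟨AlgHom.id R i.Q⟩
  comp f g := ⟨g.hom.comp f.hom⟩

lemma exists_equiv {S : Type u} [CommRing S] [Algebra R S] (h : HNbhd K S) :
    ∃ i : HNI K, Nonempty (i.Q ≃ₐ[R] S) := by
  have := h.1
  obtain ⟨n, f, hf⟩ := Algebra.FiniteType.iff_quotient_mvPolynomial''.mp
    (inferInstance : Algebra.FiniteType R S)
  let e := Ideal.quotientKerAlgEquivOfSurjective hf
  exact ⟨⟨n, _, h.of_equiv e.symm⟩, ⟨e⟩⟩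

lemma exists_sup (i j : HNI K) : ∃ k : HNI K, Nonempty (i.Q →ₐ[R] k.Q) ∧
    Nonempty (j.Q →ₐ[R] k.Q) := by
  obtain ⟨k, ⟨e⟩⟩ := exists_equiv (i.prop.tensor j.prop)
  exact ⟨k, ⟨e.symm.toAlgHom.comp Algebra.TensorProduct.includeLeft⟩,
    ⟨e.symm.toAlgHom.comp Algebra.TensorProduct.includeRight⟩⟩

instance : Nonempty (HNI K) := (exists_equiv (HNbhd.self (K := K))).nonempty

instance : IsFiltered (HNI K) where
  cocone_objs i j := by
    obtain ⟨k, ⟨f⟩, ⟨g⟩⟩ := exists_sup i j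
    exact ⟨k, ⟨f⟩, ⟨g⟩, trivial⟩
  cocone_maps i j f g := by
    obtain ⟨U, _, _, φ, hU, h⟩ := HNbhd.exists_coeq i.prop j.prop f.hom g.hom
    obtain ⟨k, ⟨e⟩⟩ := exists_equiv hU
    refine ⟨k, ⟨e.symm.toAlgHom.comp φ⟩, ?_⟩
    change Mor.mk _ = Mor.mk _
    rw [AlgHom.comp_assoc, h, AlgHom.comp_assoc]

variable (K) in
noncomputable def F : HNI K ⥤ CommRingCat.{u} where
  obj i := CommRingCat.of i.Q
  map f := CommRingCat.ofHom f.hom.toRingHom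
  map_id i := rfl
  map_comp f g := rfl

end HNI

theorem exists_hnbhd_colimit {R : Type u} [CommRing R] (K : Ideal R) :
    ∃ (H : Type u) (_ : CommRing H) (_ : Algebra R H) (c : ∀ i : HNI K, i.Q →ₐ[R] H),
      (∀ h, ∃ i x, c i x = h) ∧
      (∀ i x y, c i x = c i y → ∃ (j : HNI K) (φ : i.Q →ₐ[R] j.Q), φ x = φ y) ∧
      (∀ (i j : HNI K) (φ : i.Q →ₐ[R] j.Q), (c j).comp φ = c i) ∧
      (∀ (C : Type u) [CommRing C] [Algebra R C] (g : ∀ i : HNI K, i.Q →ₐ[R] C),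
        (∀ (i j : HNI K) (φ : i.Q →ₐ[R] j.Q), (g j).comp φ = g i) →
          ∃ G : H →ₐ[R] C, ∀ i, G.comp (c i) = g i) := by
  let H := colimit (HNI.F K)
  let c : ∀ i : HNI K, i.Q →+* H := fun i ↦ (colimit.ι (HNI.F K) i).hom
  have hc : ∀ (i j : HNI K) (φ : i.Q →ₐ[R] j.Q) x, c j (φ x) = c i x := fun i j φ x ↦ by
    have := colimit.w (HNI.F K) (j := j) (j' := i) ⟨φ⟩
    exact congr($(this).hom x)
  obtain ⟨i₀⟩ : Nonempty (HNI K) := inferInstance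
  let r : R →+* H := (c i₀).comp (algebraMap R i₀.Q)
  have hr : ∀ (i : HNI K) x, c i (algebraMap R i.Q x) = r x := fun i x ↦ by
    obtain ⟨k, ⟨f⟩, ⟨g⟩⟩ := HNI.exists_sup i i₀
    rw [← hc i k f, AlgHom.commutes, ← AlgHom.commutes g, hc]
    rfl
  let _ : Algebra R H := r.toAlgebra
  refine ⟨H, inferInstance, inferInstance, fun i ↦ { c i with commutes' := hr i }, ?_, ?_, ?_, ?_⟩
  · intro h
    obtain ⟨i, x, hx⟩ := Concrete.colimit_exists_rep (HNI.F K) h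
    exact ⟨i, x, hx⟩
  · intro i x y h
    obtain ⟨j, f, hf⟩ := ((colimit.isColimit (HNI.F K)).eq_iff'
      (i := i) x y).mp h
    exact ⟨j, f.hom, hf⟩
  · intro i j φ
    ext x
    exact hc i j φ x
  · intro C _ _ g hg
    let t : Cocone (HNI.F K) :=
      { pt := CommRingCat.of C
        ι := { app := fun i ↦ CommRingCat.ofHom (g i).toRingHom
               naturality := fun i j f ↦ by
                ext x
                exact congr($(hg i j f.hom) x) } }
    let G : H →+* C := (colimit.desc (HNI.F K) t).hom
    have hG : ∀ i x, G (c i x) = g i x := fun i x ↦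
      congr($(colimit.ι_desc t i).hom x)
    refine ⟨{ G with commutes' := fun x ↦ ?_ }, fun i ↦ ?_⟩
    · change G (c i₀ (algebraMap R i₀.Q x)) = _
      rw [hG, AlgHom.commutes]
    · ext x
      exact hG i x
end Part2

section Part3
open Polynomial

lemma HenselianRing.isUnit_of_sub_mem {C : Type u} [CommRing C] {J : Ideal C}
    (hJ : HenselianRing C J) {x y : C} (h : x - y ∈ J)
    (hy : IsUnit (Ideal.Quotient.mk J y)) : IsUnit x := by
  have := isLocalHom_of_le_jacobson_bot J hJ.jac
  apply IsUnit.of_map (Ideal.Quotient.mk J)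
  rwa [Ideal.Quotient.eq.mpr h]

lemma HNbhd.away {R : Type u} [CommRing R] {K : Ideal R} (r : R) (hr : r - 1 ∈ K) :
    HNbhd K (Localization.Away r) := by
  refine ⟨.of_isLocalizationAway r, fun C _ _ J hJ hK ↦ ⟨?_, ⟨fun f g ↦ ?_⟩⟩⟩
  · have hu : IsUnit (algebraMap R C r) := by
      refine hJ.isUnit_of_sub_mem (y := 1) ?_ (by simp)
      rw [← map_one (algebraMap R C), ← map_sub]
      exact hK (Ideal.mem_map_of_mem _ hr)
    refine ⟨IsLocalization.liftAlgHom (M := Submonoid.powers r) (f := Algebra.ofId R C) ?_⟩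
    rintro ⟨_, n, rfl⟩
    simpa [Algebra.ofId_apply] using hu.pow n
  · exact IsLocalization.algHom_ext (Submonoid.powers r) (by ext)

lemma HenselianRing.root_unique {C : Type u} [CommRing C] {J : Ideal C}
    (hJ : HenselianRing C J) (f : C[X]) {x y : C} (hx : f.eval x = 0) (hy : f.eval y = 0)
    (h : y - x ∈ J) (hu : IsUnit (f.derivative.eval x)) : x = y := by
  obtain ⟨c, hc⟩ := exists_mul_sq_add_linear_part_eq_eval_add f x (y - x)
  have h1 : (f.derivative.eval x + c * (y - x)) * (y - x) = 0 := by grind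
  have h2 : IsUnit (f.derivative.eval x + c * (y - x)) := by
    refine hJ.isUnit_of_sub_mem (y := f.derivative.eval x) ?_ (hu.map _)
    rw [add_sub_cancel_left]
    exact J.mul_mem_left _ h
  have h3 := (h2.mul_right_eq_zero).mp h1
  exact (sub_eq_zero.mp h3).symm

lemma HNbhd.root {R : Type u} [CommRing R] {K : Ideal R} (f : R[X]) (hf : f.Monic) (a b : R)
    (ha : f.eval a ∈ K) (hb : f.derivative.eval a * b - 1 ∈ K) :
    ∃ (S : Type u) (_ : CommRing S) (_ : Algebra R S) (x : S), HNbhd K S ∧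
      aeval x f = 0 ∧ x - algebraMap R S a ∈ K.map (algebraMap R S) := by
  obtain ⟨h, hh⟩ : X - C a ∣ f - C (f.eval a) := by
    rw [dvd_iff_isRoot]; simp
  have hha : f.derivative.eval a = h.eval a := by
    have := congr((derivative $hh).eval a)
    simpa using this
  let P : StandardEtalePair R :=
    { f := f, monic_f := hf, g := derivative f * h, cond := ⟨h, 0, 1, by ring⟩ }
  have hX := P.hasMap_X
  have hfX : aeval P.X f = 0 := hX.1
  have hhX : IsUnit (aeval P.X h) := by
    have := hX.2
    simp only [P, map_mul] at this
    exact isUnit_of_mul_isUnit_right this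
  have hd : P.X - algebraMap R P.Ring a ∈ K.map (algebraMap R P.Ring) := by
    have h1 := congr(aeval P.X $hh)
    simp only [map_sub, map_mul, hfX, aeval_X, aeval_C] at h1
    obtain ⟨v, hv⟩ := hhX
    have h2 : P.X - algebraMap R P.Ring a =
        - (algebraMap R P.Ring (f.eval a)) * (↑v⁻¹ : P.Ring) := by
      rw [← hv] at h1
      rw [Units.eq_mul_inv_iff_mul_eq, ← h1]; ring
    rw [h2]
    exact Ideal.mul_mem_right _ _ (neg_mem (Ideal.mem_map_of_mem _ ha))
  refine ⟨P.Ring, inferInstance, inferInstance, P.X, ⟨inferInstance, ?_⟩, hfX, hd⟩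
  intro A _ _ J hJ hK
  have hbA : IsUnit (Ideal.Quotient.mk J (algebraMap R A (f.derivative.eval a))) := by
    refine IsUnit.of_mul_eq_one (Ideal.Quotient.mk J (algebraMap R A b)) ?_
    rw [← map_mul, ← map_mul, ← map_one (Ideal.Quotient.mk J), Ideal.Quotient.eq,
      ← map_one (algebraMap R A), ← map_sub]
    exact hK (Ideal.mem_map_of_mem _ hb)
  have key : ∀ (q : R[X]) (y : A), y - algebraMap R A a ∈ J →
      aeval y q - algebraMap R A (q.eval a) ∈ J := fun q y hy ↦ by
    have h1 : algebraMap R A (q.eval a) = (q.map (algebraMap R A)).eval (algebraMap R A a) := by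
      rw [eval_map_apply]
    have h2 : aeval y q = (q.map (algebraMap R A)).eval y := by simp
    rw [h1, h2]
    exact Ideal.mem_of_dvd _ (sub_dvd_eval_sub _ _ _) hy
  refine ⟨?_, ⟨fun φ ψ ↦ ?_⟩⟩
  · obtain ⟨y, hy, hya⟩ := hJ.is_henselian (f.map (algebraMap R A)) (hf.map _) (algebraMap R A a)
      (by rw [eval_map_apply]; exact hK (Ideal.mem_map_of_mem _ ha))
      (by rw [derivative_map, eval_map_apply]; exact hbA)
    refine ⟨P.lift y ⟨by simpa [P, IsRoot] using hy, ?_⟩⟩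
    refine hJ.isUnit_of_sub_mem (key _ y hya) ?_
    simp only [P, eval_mul, map_mul, ← hha]
    exact hbA.mul hbA
  · apply P.hom_ext
    have hm : ∀ φ : P.Ring →ₐ[R] A, φ P.X - algebraMap R A a ∈ J := fun φ ↦ by
      have := Ideal.mem_map_of_mem (φ : P.Ring →+* A) hd
      rw [Ideal.map_map] at this
      have h3 : (φ : P.Ring →+* A).comp (algebraMap R P.Ring) = algebraMap R A := φ.comp_algebraMap
      rw [h3] at this
      simpa using hK this
    have hr : ∀ φ : P.Ring →ₐ[R] A, aeval (φ P.X) f = 0 := fun φ ↦ by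
      rw [aeval_algHom_apply, hfX, map_zero]
    refine hJ.root_unique (f.map (algebraMap R A)) (by simpa using hr φ) (by simpa using hr ψ)
      ?_ ?_
    · have := J.sub_mem (hm ψ) (hm φ)
      simpa using this
    · rw [derivative_map, eval_map_algebraMap]
      exact hJ.isUnit_of_sub_mem (key _ _ (hm φ)) hbA
end Part3

section Part4
open Polynomial

lemma AlgHom.mem_map_ideal {R S T : Type u} [CommRing R] [CommRing S] [CommRing T] [Algebra R S]
    [Algebra R T] (K : Ideal R) (f : S →ₐ[R] T) {x : S} (hx : x ∈ K.map (algebraMap R S)) :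
    f x ∈ K.map (algebraMap R T) := by
  have := Ideal.mem_map_of_mem f.toRingHom hx
  rw [Ideal.map_map] at this
  have h2 : f.toRingHom.comp (algebraMap R S) = algebraMap R T := f.comp_algebraMap
  rw [h2] at this
  exact this

lemma HNbhd.exists_hni {R S T : Type u} [CommRing R] [CommRing S] [CommRing T] [Algebra R S]
    [Algebra S T] {K : Ideal R} (h : HNbhd K S) (hT : HNbhd (K.map (algebraMap R S)) T) :
    ∃ (j : HNI K) (φ : S →ₐ[R] j.Q) (ψ : T →+* j.Q),
        ∀ x, ψ (algebraMap S T x) = φ x := by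
  let _ : Algebra R T := ((algebraMap S T).comp (algebraMap R S)).toAlgebra
  have : IsScalarTower R S T := .of_algebraMap_eq' rfl
  obtain ⟨j, ⟨e⟩⟩ := HNI.exists_equiv (h.trans hT)
  exact ⟨j, e.symm.toAlgHom.comp (IsScalarTower.toAlgHom R S T), (e.symm : T →+* j.Q),
      fun x ↦ rfl⟩

theorem exists_flat_henselization {R : Type u} [CommRing R] (K : Ideal R) :
    ∃ (H : Type u) (_ : CommRing H) (_ : Algebra R H),
      Module.Flat R H ∧ HenselianRing H (K.map (algebraMap R H)) ∧
      ∀ (C : Type u) [CommRing C] [Algebra R C] (J : Ideal C),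
        HenselianRing C J → K.map (algebraMap R C) ≤ J →
          Nonempty (H →ₐ[R] C) ∧ Subsingleton (H →ₐ[R] C) := by
  obtain ⟨H, _, _, c, hsurj, heq, hcomp, hdesc⟩ := exists_hnbhd_colimit K
  have hc : ∀ {i j : HNI K} (φ : i.Q →ₐ[R] j.Q) x, c j (φ x) = c i x := fun {i j} φ x ↦
    congr($(hcomp i j φ) x)
  have hrange : ∀ {i j : HNI K} (_ : i.Q →ₐ[R] j.Q), (c i).range ≤ (c j).range := by
    rintro i j φ _ ⟨x, rfl⟩
    exact ⟨φ x, hc φ x⟩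
  -- nbhds of nbhds
  have hext : ∀ (i : HNI K) (S : Type u) [CommRing S] [Algebra i.Q S],
      HNbhd (K.map (algebraMap R i.Q)) S → ∃ (j : HNI K) (φ : i.Q →ₐ[R] j.Q) (ψ : S →+* j.Q),
        ∀ x, ψ (algebraMap i.Q S x) = φ x := by
    intro i S _ _ hS
    exact i.prop.exists_hni hS
  have hfin : ∀ s : Finset H, ∃ i, ∀ h ∈ s, h ∈ (c i).range := by
    classical
    intro s
    induction s using Finset.induction_on with
    | empty => exact ⟨Classical.arbitrary _, by simp⟩
    | insert a s _ ih =>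
      obtain ⟨i, hi⟩ := ih
      obtain ⟨j, x, hx⟩ := hsurj a
      obtain ⟨k, ⟨f⟩, ⟨g⟩⟩ := HNI.exists_sup i j
      refine ⟨k, fun h hh ↦ ?_⟩
      rcases Finset.mem_insert.mp hh with rfl | hh
      · exact hrange g ⟨x, hx⟩
      · exact hrange f (hi h hh)
  -- lifting membership in K
  have hmem0 : ∀ h ∈ K.map (algebraMap R H), ∃ (i : HNI K), ∃ x ∈ K.map (algebraMap R i.Q),
      c i x = h := by
    intro h hh
    induction hh using Submodule.span_induction with
    | mem x hx =>
      obtain ⟨k, hk, rfl⟩ := hx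
      exact ⟨Classical.arbitrary _, _, Ideal.mem_map_of_mem _ hk, AlgHom.commutes _ _⟩
    | zero => exact ⟨Classical.arbitrary _, 0, zero_mem _, map_zero _⟩
    | add x y _ _ hx hy =>
      obtain ⟨i, x, hx, rfl⟩ := hx
      obtain ⟨j, y, hy, rfl⟩ := hy
      obtain ⟨k, ⟨f⟩, ⟨g⟩⟩ := HNI.exists_sup i j
      refine ⟨k, f x + g y, add_mem ?_ ?_, by simp [hc]⟩
      · exact f.mem_map_ideal K hx
      · exact g.mem_map_ideal K hy
    | smul a x _ hx =>
      obtain ⟨i, x, hx, rfl⟩ := hx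
      obtain ⟨j, y, rfl⟩ := hsurj a
      obtain ⟨k, ⟨f⟩, ⟨g⟩⟩ := HNI.exists_sup i j
      refine ⟨k, g y * f x, Ideal.mul_mem_left _ _ ?_, by simp [hc]⟩
      exact f.mem_map_ideal K hx
  have hKmap : ∀ {i j : HNI K} (f : i.Q →ₐ[R] j.Q) {x}, x ∈ K.map (algebraMap R i.Q) →
      f x ∈ K.map (algebraMap R j.Q) := by
    intro i j f x hx
    exact f.mem_map_ideal K hx
  have hmem : ∀ (i : HNI K) (x : i.Q), c i x ∈ K.map (algebraMap R H) →
      ∃ (j : HNI K) (φ : i.Q →ₐ[R] j.Q), φ x ∈ K.map (algebraMap R j.Q) := by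
    intro i x hx
    obtain ⟨j, y, hy, hxy⟩ := hmem0 _ hx
    obtain ⟨k, ⟨f⟩, ⟨g⟩⟩ := HNI.exists_sup i j
    rw [← hc f, ← hc g] at hxy
    obtain ⟨l, φ, h⟩ := heq _ _ _ hxy
    exact ⟨l, φ.comp f, by
      simp only [AlgHom.comp_apply, ← h]; exact hKmap φ (hKmap g hy)⟩
  have hKc : ∀ (i : HNI K) {x : i.Q}, x ∈ K.map (algebraMap R i.Q) →
      c i x ∈ K.map (algebraMap R H) := by
    intro i x hx
    exact (c i).mem_map_ideal K hx
  refine ⟨H, inferInstance, inferInstance, ?_, ⟨?_, ?_⟩, ?_⟩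
  · refine Module.Flat.iff_forall_isTrivialRelation.mpr fun {l f x} h ↦ ?_
    classical
    obtain ⟨i, hi⟩ := hfin (Finset.univ.image x)
    have hi' : ∀ k, ∃ y : i.Q, c i y = x k := fun k ↦ hi _ (by simp)
    choose y hy using hi'
    have h1 : c i (∑ k, f k • y k) = c i 0 := by
      simp only [map_sum, map_smul, hy, h, map_zero]
    obtain ⟨j, φ, h2⟩ := heq _ _ _ h1
    simp only [map_sum, map_smul, map_zero] at h2
    have := j.prop.1
    have : Module.Flat R j.Q := inferInstance
    obtain ⟨m, a, z, hz, ha⟩ := Module.Flat.isTrivialRelation_of_sum_smul_eq_zero h2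
    refine ⟨m, a, fun t ↦ c j (z t), fun k ↦ ?_, ha⟩
    have hzk : φ (y k) = _ := hz k
    rw [← hy, ← hc φ, hzk]
    simp only [map_sum, map_smul]
  · intro h hh
    rw [Ideal.mem_jacobson_bot]
    intro t
    obtain ⟨i, x, hx, hxe⟩ := hmem0 _ (Ideal.mul_mem_right t _ hh)
    obtain ⟨j, φ, ψ, hj⟩ := hext i _ (HNbhd.away (x + 1) (by simpa using hx))
    have h1 : IsUnit (φ (x + 1)) := by
      rw [← hj]
      exact (IsLocalization.Away.algebraMap_isUnit (x + 1)).map ψ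
    have h2 := h1.map (c j)
    rwa [hc, map_add, hxe, map_one] at h2
  · intro f hf a₀ ha hb
    obtain ⟨b, hb⟩ := isUnit_iff_exists_inv.mp hb
    obtain ⟨b, rfl⟩ := Ideal.Quotient.mk_surjective b
    rw [← map_mul, ← map_one (Ideal.Quotient.mk _), Ideal.Quotient.eq] at hb
    classical
    obtain ⟨i, hi⟩ := hfin (insert a₀ (insert b f.coeffs))
    obtain ⟨a, haa : c i a = a₀⟩ := hi a₀ (by simp)
    subst haa
    obtain ⟨b', hbb : c i b' = b⟩ := hi b (by simp)
    subst hbb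
    obtain ⟨p, hp, -, hpm⟩ := lifts_and_natDegree_eq_and_monic (f := (c i).toRingHom) (p := f) (by
      rw [lifts_iff_coeffs_subset_range]
      intro h hh
      exact hi h (Finset.mem_insert_of_mem (Finset.mem_insert_of_mem hh))) hf
    subst hp
    have e1 : ∀ q : i.Q[X], (q.map (c i).toRingHom).eval (c i a) = c i (q.eval a) := fun q ↦
      eval_map_apply (f := (c i).toRingHom) ..
    obtain ⟨j, φ, hj⟩ := hmem i (p.eval a) (by simpa only [← e1] using ha)
    obtain ⟨k, χ, hk⟩ := hmem j (φ (p.derivative.eval a * b' - 1)) (by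
      rw [hc]
      simpa only [map_sub, map_mul, map_one, ← e1, derivative_map] using hb)
    let θ := χ.comp φ
    have e2 : ∀ q : i.Q[X], (q.map θ.toRingHom).eval (θ a) = θ (q.eval a) := fun q ↦
      eval_map_apply (f := θ.toRingHom) ..
    obtain ⟨S, _, _, x, hS, hx, hxa⟩ := HNbhd.root (K := K.map (algebraMap R k.Q))
      (p.map θ.toRingHom) (hpm.map _) (θ a) (θ b')
      (by rw [e2]; exact hKmap χ hj) (by
        rw [derivative_map, e2, ← map_mul, ← map_one θ, ← map_sub]
        exact hk)
    obtain ⟨l, η, ψ, hl⟩ := hext k _ hS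
    refine ⟨c l (ψ x), ?_, ?_⟩
    · have h1 := congr(c l (ψ $hx))
      rw [aeval_def, map_zero, map_zero, eval₂_map] at h1
      have h2 := hom_eval₂ p ((algebraMap k.Q S).comp θ.toRingHom) ((c l).toRingHom.comp ψ) x
      rw [IsRoot, eval_map]
      refine Eq.trans ?_ h1
      refine Eq.trans ?_ h2.symm
      congr 1
      refine RingHom.ext fun y ↦ ?_
      change c i y = c l (ψ (algebraMap k.Q S (θ y)))
      rw [hl, hc, hc]
    · have h1 := Ideal.mem_map_of_mem ψ hxa
      rw [Ideal.map_map] at h1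
      have h2 : ψ.comp (algebraMap k.Q S) = η.toRingHom := RingHom.ext fun y ↦ hl y
      rw [h2, Ideal.map_map] at h1
      have h3 : η.toRingHom.comp (algebraMap R k.Q) = algebraMap R l.Q := η.comp_algebraMap
      rw [h3] at h1
      have h4 := hKc l h1
      rwa [map_sub, map_sub, hl, hc, hc] at h4
  · intro C _ _ J hJ hK
    refine ⟨?_, ⟨fun f g ↦ ?_⟩⟩
    · have hg : ∀ i : HNI K, Nonempty (i.Q →ₐ[R] C) := fun i ↦ (i.prop.2 C J hJ hK).1
      let g := fun i ↦ Classical.choice (hg i)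
      obtain ⟨G, -⟩ := hdesc C g fun i j φ ↦ by
        have := (i.prop.2 C J hJ hK).2
        exact Subsingleton.elim _ _
      exact ⟨G⟩
    · ext h
      obtain ⟨i, x, rfl⟩ := hsurj h
      have := (i.prop.2 C J hJ hK).2
      exact congr($(Subsingleton.elim (f.comp (c i)) (g.comp (c i))) x)
end Part4

section Part5
theorem IsHenselization.flat {R B : Type u} [CommRing R] [CommRing B] [Algebra R B] {K : Ideal R}
    (h : IsHenselization K (algebraMap R B)) : Module.Flat R B := by
  obtain ⟨H, _, _, hflat, hH, huniv⟩ := exists_flat_henselization K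
  obtain ⟨hB, hBu⟩ := h
  obtain ⟨f⟩ := (huniv B _ hB le_rfl).1
  obtain ⟨g, hg, -⟩ := hBu H _ hH (algebraMap R H) le_rfl
  let g' : B →ₐ[R] H := { g with commutes' := fun r ↦ congr($hg r) }
  have h1 : g'.comp f = AlgHom.id R H := by
    have := (huniv H _ hH le_rfl).2
    exact Subsingleton.elim _ _
  have h2 : f.comp g' = AlgHom.id R B := by
    have := (hBu B _ hB (algebraMap R B) le_rfl).unique (y₁ := (f.comp g').toRingHom)
      (y₂ := RingHom.id B) (f.comp g').comp_algebraMap rfl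
    exact AlgHom.ext fun x ↦ congr($this x)
  exact Module.Flat.of_linearEquiv (AlgEquiv.ofAlgHom g' f h1 h2).toLinearEquiv

/-- Lifting against nilpotent thickenings. -/
lemma etale_lift {A R E C : Type u} [CommRing A] [CommRing R] [CommRing E] [CommRing C]
    [Algebra A R] [Algebra A E] [Algebra A C] [Algebra.FormallyEtale A R] (p : E →ₐ[A] C)
    (hp : Function.Surjective p) (M : ℕ) (hM : RingHom.ker p ^ M = ⊥) (u : R →ₐ[A] C) :
    ∃! v : R →ₐ[A] E, p.comp v = u := by
  have hnil : IsNilpotent (RingHom.ker (p : E →+* C)) := ⟨M, hM⟩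
  refine ⟨Algebra.FormallySmooth.liftOfSurjective u p hp hnil, ?_, ?_⟩
  · exact Algebra.FormallySmooth.comp_liftOfSurjective u p hp hnil
  · intro v hv
    apply Algebra.FormallyUnramified.lift_unique' p hnil
    rw [hv, Algebra.FormallySmooth.comp_liftOfSurjective]

theorem IsHEtale.to {A B : Type u} [CommRing A] [CommRing B] [Algebra A B] (I : Ideal A)
    (h : IsHEtale (algebraMap A B) I) :
    IsHfp (algebraMap A B) I ∧ IsHFormallyEtale (algebraMap A B) I ∧ Module.Flat A B := by
  obtain ⟨R, _, _, ρ, het, hcomp, hH⟩ := h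
  let _ : Algebra R B := ρ.toAlgebra
  have : IsScalarTower A R B := .of_algebraMap_eq' hcomp.symm
  refine ⟨⟨R, inferInstance, algebraMap A R, ρ, ?_, hcomp, hH⟩, ?_, ?_⟩
  · rw [RingHom.finitePresentation_algebraMap]; infer_instance
  · intro E C _ _ e c p u hpe huc ⟨N, hN, hNE, hNC⟩ hp ⟨M, hM, hMp⟩
    let _ : Algebra A E := e.toAlgebra
    let _ : Algebra A C := c.toAlgebra
    let p' : E →ₐ[A] C := { p with commutes' := fun r ↦ congr($hpe r) }
    let u' : R →ₐ[A] C := { u.comp ρ with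
      commutes' := fun r ↦ by
        have := congr($huc r)
        rw [← hcomp] at this
        exact this }
    obtain ⟨w, hw, hwu⟩ := etale_lift p' hp M hMp u'
    have hE : HenselianRing E (I.map e) := henselianRing_of_nilpotent _ N (by rw [← Ideal.map_pow, hNE])
    have hC : HenselianRing C (I.map c) := henselianRing_of_nilpotent _ N (by rw [← Ideal.map_pow, hNC])
    have hwA : w.toRingHom.comp (algebraMap A R) = e := w.comp_algebraMap
    have huA : u'.toRingHom.comp (algebraMap A R) = c := u'.comp_algebraMap
    obtain ⟨v, hv, hvu⟩ := hH.2 E _ hE w.toRingHom (by rw [Ideal.map_map, hwA])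
    refine ⟨v, ⟨?_, ?_⟩, ?_⟩
    · rw [← hcomp, ← RingHom.comp_assoc, hv, hwA]
    · refine (hH.2 C _ hC u'.toRingHom (by rw [Ideal.map_map, huA])).unique ?_ rfl
      rw [RingHom.comp_assoc, hv]
      exact RingHom.ext fun x ↦ congr($hw x)
    · intro v' ⟨h1, h2⟩
      apply hvu
      let w' : R →ₐ[A] E := { v'.comp ρ with
      commutes' := fun r ↦ by
        have := congr($h1 r)
        rw [← hcomp] at this
        exact this }
      have : w' = w := hwu _ (AlgHom.ext fun x ↦ congr($h2 (ρ x)))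
      exact RingHom.ext fun x ↦ congr($this x)
  · have : Module.Flat R B := hH.flat
    exact Module.Flat.trans A R B
end Part5

section Part6
open TensorProduct

lemma IsHenselization.away {R B : Type u} [CommRing R] [CommRing B] [Algebra R B] {K : Ideal R}
    (h : IsHenselization K (algebraMap R B)) (r : R) (hr : r - 1 ∈ K) :
    ∃ ρ : Localization.Away r →+* B, ρ.comp (algebraMap R _) = algebraMap R B ∧
      IsHenselization (K.map (algebraMap R (Localization.Away r))) ρ := by
  have hu : IsUnit (algebraMap R B r) := by
    have := h.1
    refine HenselianRing.isUnit_of_sub_mem this (y := 1) ?_ (by simp)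
    rw [← map_one (algebraMap R B), ← map_sub]
    exact Ideal.mem_map_of_mem _ hr
  let ρ := IsLocalization.Away.lift (S := Localization.Away r) r hu
  have hρ : ρ.comp (algebraMap R _) = algebraMap R B := IsLocalization.Away.lift_comp r hu
  refine ⟨ρ, hρ, ?_, ?_⟩
  · rw [Ideal.map_map, hρ]
    exact h.1
  · intro C _ J hJ f hf
    obtain ⟨g, hg, hgu⟩ := h.2 C J hJ (f.comp (algebraMap R _)) (by rwa [← Ideal.map_map])
    refine ⟨g, ?_, fun g' hg' ↦ hgu _ ?_⟩
    · apply IsLocalization.ringHom_ext (.powers r)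
      rw [RingHom.comp_assoc, hρ, hg]
    · rw [← hg', RingHom.comp_assoc, hρ]

lemma IsHenselization.exists_retraction {R B : Type u} [CommRing R] [CommRing B] [Algebra R B]
    {K : Ideal R} (h : IsHenselization K (algebraMap R B)) :
    ∃ π : B →+* R ⧸ K, π.comp (algebraMap R B) = Ideal.Quotient.mk K := by
  obtain ⟨g, hg, -⟩ := h.2 (R ⧸ K) ⊥ (henselianRing_of_nilpotent _ 1 (by simp))
    (Ideal.Quotient.mk K) (by simp)
  exact ⟨g, hg⟩

lemma flat_of_faithfullyFlat_comp (A S T : Type u) [CommRing A] [CommRing S] [CommRing T]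
    [Algebra A S] [Algebra A T] [Algebra S T] [IsScalarTower A S T] [Module.Flat A T]
    [Module.FaithfullyFlat S T] : Module.Flat A S := by
  rw [Module.Flat.iff_lTensor_preserves_injective_linearMap]
  intro M N _ _ _ _ f hf
  have h1 := Module.Flat.lTensor_preserves_injective_linearMap (M := T) f hf
  have h2 : Function.Injective ((AlgebraTensorModule.lTensor S S f).lTensor T) := by
    have h3 : ∀ x, AlgebraTensorModule.cancelBaseChange A S S T N
        ((AlgebraTensorModule.lTensor S S f).lTensor T x) =
        f.lTensor T (AlgebraTensorModule.cancelBaseChange A S S T M x) := by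
      intro x
      induction x with
      | zero => simp
      | add x y hx hy => simp only [map_add, hx, hy]
      | tmul t x =>
        induction x with
        | zero => simp
        | add x y hx hy => simp only [map_add, tmul_add, hx, hy]
        | tmul s m => simp
    intro x y hxy
    apply (AlgebraTensorModule.cancelBaseChange A S S T M).injective
    apply h1
    rw [← h3, ← h3, hxy]
  exact (Module.FaithfullyFlat.lTensor_injective_iff_injective S T _).mp h2

lemma flat_localization {A R B : Type u} [CommRing A] [CommRing R] [CommRing B] [Algebra A R]
    [Algebra R B] [Algebra A B] [IsScalarTower A R B] {K : Ideal R}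
    (h : IsHenselization K (algebraMap R B)) [Module.Flat A B] (q : Ideal R) [q.IsPrime]
    (hq : K ≤ q) : Module.Flat A (Localization.AtPrime q) := by
  obtain ⟨π, hπ⟩ := h.exists_retraction
  have hprime : (q.map (Ideal.Quotient.mk K)).IsPrime :=
    Ideal.map_isPrime_of_surjective Ideal.Quotient.mk_surjective (by simpa using hq)
  let Q : Ideal B := (q.map (Ideal.Quotient.mk K)).comap π
  have hQ : Q.IsPrime := inferInstance
  have hQq : Q.LiesOver q := ⟨by
    rw [Ideal.under_def, Ideal.comap_comap, hπ,
      Ideal.comap_map_of_surjective _ Ideal.Quotient.mk_surjective]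
    rw [← RingHom.ker_eq_comap_bot, Ideal.mk_ker]
    exact (sup_eq_left.mpr hq).symm⟩
  have : Module.Flat R B := h.flat
  let := Localization.AtPrime.algebraOfLiesOver q Q
  have : IsScalarTower R (Localization.AtPrime q) (Localization.AtPrime Q) := inferInstance
  have : Module.Flat (Localization.AtPrime q) (Localization.AtPrime Q) := by
    rw [Module.flat_iff_of_isLocalization (Localization.AtPrime q) q.primeCompl]
    exact Module.Flat.trans R B _
  have : Module.FaithfullyFlat (Localization.AtPrime q) (Localization.AtPrime Q) :=
    Module.FaithfullyFlat.of_flat_of_isLocalHom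
  have : Module.Flat A (Localization.AtPrime Q) := Module.Flat.trans A B _
  have : IsScalarTower A (Localization.AtPrime q) (Localization.AtPrime Q) := inferInstance
  exact flat_of_faithfullyFlat_comp A _ (Localization.AtPrime Q)
end Part6

section Part7
open TensorProduct

lemma formallyUnramified_quotient {A R B : Type u} [CommRing A] [CommRing R] [CommRing B]
    [Algebra A R] [Algebra R B] [Algebra A B] [IsScalarTower A R B] {I : Ideal A}
    (h : IsHenselization (I.map (algebraMap A R)) (algebraMap R B))
    (hB : IsHFormallyEtale (algebraMap A B) I) :
    Algebra.FormallyUnramified A (R ⧸ I.map (algebraMap A R)) := by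
  obtain ⟨π, hπ⟩ := h.exists_retraction
  rw [Algebra.FormallyUnramified.iff_comp_injective]
  intro E _ _ J hJ g₁ g₂ hg
  have hπA : π.comp (algebraMap A B) = algebraMap A (R ⧸ I.map (algebraMap A R)) := by
    rw [IsScalarTower.algebraMap_eq A R B, ← RingHom.comp_assoc, hπ]
    rfl
  have hI : I.map (algebraMap A (R ⧸ I.map (algebraMap A R))) = ⊥ := by
    have : algebraMap A (R ⧸ I.map (algebraMap A R)) =
      (Ideal.Quotient.mk (I.map (algebraMap A R))).comp (algebraMap A R) := rfl
    rw [this, ← Ideal.map_map, Ideal.map_quotient_self]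
  have hg₁ : g₁.toRingHom.comp (algebraMap A _) = algebraMap A E := g₁.comp_algebraMap
  have hg₂ : g₂.toRingHom.comp (algebraMap A _) = algebraMap A E := g₂.comp_algebraMap
  have hE : I.map (algebraMap A E) = ⊥ := by
    rw [← hg₁, ← Ideal.map_map, hI, Ideal.map_bot]
  obtain ⟨v, -, hv⟩ := hB E (E ⧸ J) (algebraMap A E) (algebraMap A (E ⧸ J))
    (Ideal.Quotient.mk J) (((Ideal.Quotient.mk J).comp g₁.toRingHom).comp π) rfl
    (by rw [RingHom.comp_assoc, hπA, RingHom.comp_assoc, hg₁]; rfl)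
    ⟨1, le_rfl, by rw [pow_one, hE], by
      have : algebraMap A (E ⧸ J) = (Ideal.Quotient.mk J).comp (algebraMap A E) := rfl
      rw [pow_one, this, ← Ideal.map_map, hE, Ideal.map_bot]⟩
    Ideal.Quotient.mk_surjective ⟨2, by norm_num, by rw [Ideal.mk_ker, hJ]⟩
  have h1 := hv (g₁.toRingHom.comp π) ⟨by rw [RingHom.comp_assoc, hπA, hg₁], rfl⟩
  have h2 := hv (g₂.toRingHom.comp π) ⟨by rw [RingHom.comp_assoc, hπA, hg₂], by
    refine RingHom.ext fun x ↦ ?_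
    exact congr($hg.symm (π x))⟩
  refine AlgHom.ext fun x ↦ ?_
  obtain ⟨x, rfl⟩ := Ideal.Quotient.mk_surjective x
  have h3 := congr($(h1.trans h2.symm) (algebraMap R B x))
  have h4 : π (algebraMap R B x) = Ideal.Quotient.mk _ x := congr($hπ x)
  simp only [RingHom.comp_apply, h4] at h3
  exact h3

lemma exists_unramified_away {A R : Type u} [CommRing A] [CommRing R] [Algebra A R] (I : Ideal A)
    [Algebra.FiniteType A R] [Algebra.FormallyUnramified A (R ⧸ I.map (algebraMap A R))] :
    ∃ r : R, r - 1 ∈ I.map (algebraMap A R) ∧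
      Algebra.FormallyUnramified A (Localization.Away r) := by
  let K := I.map (algebraMap A R)
  have : Algebra.FormallyUnramified (A ⧸ I) (R ⧸ K) := .of_restrictScalars A _ _
  let := Algebra.TensorProduct.rightAlgebra (R := A) (A := A ⧸ I) (B := R)
  have : Algebra.FormallyUnramified (A ⧸ I) ((A ⧸ I) ⊗[A] R) :=
    .of_equiv (Algebra.TensorProduct.quotIdealMapEquivQuotTensor R I)
  have h2 : Subsingleton ((A ⧸ I) ⊗[A] Ω[R⁄A]) :=
    (KaehlerDifferential.tensorKaehlerEquivBase A (A ⧸ I) R ((A ⧸ I) ⊗[A] R)).injective.subsingleton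
  have h3 : Subsingleton (Ω[R⁄A] ⧸ (I • ⊤ : Submodule A Ω[R⁄A])) :=
    (TensorProduct.quotTensorEquivQuotSMul Ω[R⁄A] I).symm.injective.subsingleton
  rw [Submodule.Quotient.subsingleton_iff] at h3
  have h4 : (⊤ : Submodule R Ω[R⁄A]) ≤ K • ⊤ := by
    intro x _
    have hx : x ∈ (I • ⊤ : Submodule A Ω[R⁄A]) := by rw [h3]; trivial
    induction hx using Submodule.smul_induction_on' with
    | smul a ha n hn =>
      rw [← algebraMap_smul R a n]
      exact Submodule.smul_mem_smul (Ideal.mem_map_of_mem _ ha) trivial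
    | add x _ y _ hx hy => exact add_mem (hx trivial) (hy trivial)
  obtain ⟨r, hr, hr0⟩ := Submodule.exists_sub_one_mem_and_smul_eq_zero_of_fg_of_le_smul K _
    Module.Finite.fg_top h4
  refine ⟨r, hr, ?_⟩
  rw [← Algebra.basicOpen_subset_unramifiedLocus_iff, Algebra.unramifiedLocus_eq_compl_support]
  intro q hq
  rw [Set.mem_compl_iff, Module.notMem_support_iff']
  exact fun m ↦ ⟨r, hq, hr0 m trivial⟩

attribute [local instance] Algebra.FormallyEtale.of_formallyUnramified_of_field in
open Algebra in
lemma isSmoothAt_of_flat {R S : Type u} [CommRing R] [CommRing S] [Algebra R S]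
    [Algebra.FinitePresentation R S] [FormallyUnramified R S] (p : Ideal R) (q : Ideal S)
    [p.IsPrime] [q.IsPrime] [q.LiesOver p] [Module.Flat R (Localization.AtPrime q)] :
    Algebra.IsSmoothAt R q := by
  let Rp := Localization.AtPrime p
  have : FormallySmooth p.ResidueField (p.Fiber S) := inferInstance
  let Sp := Localization (algebraMapSubmonoid S p.primeCompl)
  let Sq := Localization.AtPrime q
  let := Localization.AtPrime.algebraOfLiesOver p q
  have : Module.Flat Rp Sq := by
    rw [Module.flat_iff_of_isLocalization Rp p.primeCompl]
    assumption
  let f : Sp →ₐ[S] Sq := IsLocalization.liftAlgHom (M := algebraMapSubmonoid S p.primeCompl)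
        (f := Algebra.ofId _ _) (by
      rintro ⟨_, x, hx, rfl⟩
      simpa using! IsLocalization.map_units (M := q.primeCompl) Sq ⟨algebraMap _ _ x,
        by simp_all [q.over_def p]⟩)
  algebraize [f.toRingHom]
  have : IsScalarTower R Sp Sq := .to₁₃₄ _ S _ _
  have : IsScalarTower Rp Sp Sq := .of_algebraMap_eq' <| by
    apply IsLocalization.ringHom_ext p.primeCompl
    simp only [RingHom.comp_assoc, ← IsScalarTower.algebraMap_eq]
  have : IsLocalization (algebraMapSubmonoid Sp q.primeCompl) Sq :=
    .isLocalization_of_submonoid_le _ _ (algebraMapSubmonoid S p.primeCompl) _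
    (by rintro _ ⟨x, hx, rfl⟩; simp_all [q.over_def p])
  have : FinitePresentation Rp Sp := by
    have : Algebra.IsPushout R Rp S Sp :=
      .symm <| Algebra.isPushout_of_isLocalization p.primeCompl _ _ _
    exact .equiv (Algebra.IsPushout.equiv R Rp S Sp)
  have : FormallySmooth (IsLocalRing.ResidueField Rp) ((IsLocalRing.ResidueField Rp) ⊗[Rp] Sq) := by
    let : Algebra S ((IsLocalRing.ResidueField Rp) ⊗[R] S) := Algebra.TensorProduct.rightAlgebra
    have : FormallySmooth (IsLocalRing.ResidueField Rp) (((IsLocalRing.ResidueField Rp) ⊗[R] S) ⊗[S] Sq) :=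
      .comp _ ((IsLocalRing.ResidueField Rp) ⊗[R] S) _
    let e : (IsLocalRing.ResidueField Rp) ⊗[R] S ≃ₐ[S] S ⊗[R] (IsLocalRing.ResidueField Rp) :=
      { __ := Algebra.TensorProduct.comm _ _ _, commutes' _ := rfl }
    let e' : ((IsLocalRing.ResidueField Rp) ⊗[R] S) ⊗[S] Sq ≃ₐ[R] (IsLocalRing.ResidueField Rp) ⊗[Rp] Sq :=
      ((Algebra.TensorProduct.comm _ _ _).restrictScalars R).trans <|
      ((Algebra.TensorProduct.congr (.refl (R := S)) e).restrictScalars R).trans <|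
      ((Algebra.TensorProduct.cancelBaseChange _ _ S _ _).restrictScalars R).trans <|
      (Algebra.TensorProduct.comm _ _ _).trans (Algebra.TensorProduct.equivOfCompatibleSMul ..)
    have : e'.toAlgHom.comp (IsScalarTower.toAlgHom R p.ResidueField _) =
        IsScalarTower.toAlgHom _ _ _ := by ext
    let e'' : ((IsLocalRing.ResidueField Rp) ⊗[R] S) ⊗[S] Sq ≃ₐ[(IsLocalRing.ResidueField Rp)] (IsLocalRing.ResidueField Rp) ⊗[Rp] Sq :=
      { __ := e', commutes' r := congr($this r) }
    exact .of_equiv e''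
  have := FormallySmooth.of_formallySmooth_residueField_tensor
    (R := Rp) (S := Sq) (P := Sp) (algebraMapSubmonoid _ q.primeCompl)
  exact .comp R Rp Sq

lemma exists_etale_away {A R B : Type u} [CommRing A] [CommRing R] [CommRing B] [Algebra A R]
    [Algebra R B] [Algebra A B] [IsScalarTower A R B] {K : Ideal R}
    (h : IsHenselization K (algebraMap R B)) [Module.Flat A B] [Algebra.FinitePresentation A R]
    [Algebra.FormallyUnramified A R] :
    ∃ f : R, f - 1 ∈ K ∧ Algebra.Etale A (Localization.Away f) := by
  have hloc : PrimeSpectrum.zeroLocus (K : Set R) ⊆ Algebra.etaleLocus A R := by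
    intro q hq
    have := flat_localization (A := A) h q.asIdeal hq
    rw [Algebra.etaleLocus_eq_unramfiedLocus_inter_smoothLocus,
      Algebra.unramifiedLocus_eq_univ_iff.mpr inferInstance]
    exact ⟨trivial, isSmoothAt_of_flat (q.asIdeal.under A) q.asIdeal⟩
  obtain ⟨J, hJ⟩ := (PrimeSpectrum.isClosed_iff_zeroLocus_ideal _).mp
    (Algebra.isOpen_etaleLocus (R := A) (A := R)).isClosed_compl
  have htop : J ⊔ K = ⊤ := by
    rw [← PrimeSpectrum.zeroLocus_empty_iff_eq_top, PrimeSpectrum.zeroLocus_sup, ← hJ]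
    exact Set.eq_empty_of_forall_notMem fun x hx ↦ hx.1 (hloc hx.2)
  obtain ⟨f, hf, k, hk, hfk⟩ := Submodule.mem_sup.mp (htop ▸ Submodule.mem_top : (1 : R) ∈ J ⊔ K)
  refine ⟨f, by rw [← hfk]; simpa using hk, ?_⟩
  rw [← Algebra.basicOpen_subset_etaleLocus_iff_etale]
  intro q hq
  by_contra hq'
  have : q ∈ PrimeSpectrum.zeroLocus (J : Set R) := hJ ▸ hq'
  exact hq (this hf)

lemma IsHfp.etale {A B : Type u} [CommRing A] [CommRing B] [Algebra A B] (I : Ideal A)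
    (h : IsHfp (algebraMap A B) I) (h' : IsHFormallyEtale (algebraMap A B) I)
    [Module.Flat A B] : IsHEtale (algebraMap A B) I := by
  obtain ⟨R, _, ψ, ρ, hψ, hcomp, hH⟩ := h
  algebraize [ψ, ρ]
  have : IsScalarTower A R B := .of_algebraMap_eq' hcomp.symm
  have hH' : IsHenselization (I.map (algebraMap A R)) (algebraMap R B) := hH
  have := formallyUnramified_quotient hH' h'
  obtain ⟨r, hr, hur⟩ := exists_unramified_away (A := A) (R := R) I
  obtain ⟨ρ₁, hρ₁, hH₁⟩ := hH'.away r hr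
  algebraize [ρ₁]
  have : IsScalarTower R (Localization.Away r) B := .of_algebraMap_eq' hρ₁.symm
  have : IsScalarTower A (Localization.Away r) B := .to₁₃₄ A R _ _
  have : Algebra.FinitePresentation R (Localization.Away r) :=
    IsLocalization.Away.finitePresentation r
  have : Algebra.FinitePresentation A (Localization.Away r) := .trans A R _
  rw [Ideal.map_map, ← IsScalarTower.algebraMap_eq] at hH₁
  have hH₁' : IsHenselization (I.map (algebraMap A (Localization.Away r)))
    (algebraMap (Localization.Away r) B) := hH₁
  obtain ⟨f, hf, hfe⟩ := exists_etale_away (A := A) hH₁'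
  obtain ⟨ρ₂, hρ₂, hH₂⟩ := hH₁'.away f hf
  rw [Ideal.map_map, ← IsScalarTower.algebraMap_eq] at hH₂
  refine ⟨Localization.Away f, inferInstance, inferInstance, ρ₂, hfe, ?_, hH₂⟩
  rw [IsScalarTower.algebraMap_eq A (Localization.Away r) (Localization.Away f),
    ← RingHom.comp_assoc, hρ₂, ← IsScalarTower.algebraMap_eq]
end Part7

/-- `B` is hfp, h-formally étale and flat over the Henselian pair `(A, I)` iff `B` is
h-étale over `A`. -/
theorem isHEtale_iff_isHfp_isHFormallyEtale_flat
    {A B : Type u} [CommRing A] [CommRing B] [Algebra A B]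
    (I : Ideal A) [HenselianRing A I]
    [HenselianRing B (I.map (algebraMap A B))] :
    (IsHfp (algebraMap A B) I ∧ IsHFormallyEtale (algebraMap A B) I ∧ Module.Flat A B) ↔
      IsHEtale (algebraMap A B) I := by
  exact ⟨fun ⟨h1, h2, h3⟩ ↦ h1.etale I h2, fun h ↦ h.to I⟩
end
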